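/- Let h, d, m ∈ ℕ with m ≥ 2. Then no set V_i^j (1 ≤ j ≤ m−1) of G_{h,d,m} contains a subset that is 3-fat 7-path-connected in G_{h,d,m}. -/

import Mathlib

open SimpleGraph

namespace CGT

/-- Distance between two vertex sets, as an extended natural number. -/
noncomputable def sDist {V : Type*} (G : SimpleGraph V) (U U' : Set V) : ℕ∞ :=
  ⨅ (u : U) (v : U'), G.edist u.1 v.1

/-- The ball of radius `r` around a vertex set `U`. -/
def gBall {V : Type*} (G : SimpleGraph V) (U : Set V) (r : ℕ) : Set V :=
  {v | ∃ u ∈ U, G.edist u v ≤ (r : ℕ∞)}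

/-- A set of vertices is connected if the induced subgraph is connected. -/
def SetConn {V : Type*} (G : SimpleGraph V) (U : Set V) : Prop :=
  (G.induce U).Connected

/-- The vertex set of a walk. -/
def walkSupp {V : Type*} {G : SimpleGraph V} {a b : V} (p : G.Walk a b) : Set V :=
  {v | v ∈ p.support}

/-- `X` separates `Y` and `Z` in `G`: every path with one end in `Y` and one in `Z`
contains a vertex of `X`. -/
def Separates {V : Type*} (G : SimpleGraph V) (X Y Z : Set V) : Prop :=
  ∀ ⦃y z : V⦄, y ∈ Y → z ∈ Z → ∀ p : G.Walk y z, p.IsPath → ∃ x ∈ X, x ∈ p.support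

/-- `f` is an `(M,A)`-quasi-isometry from `G` to `H`.  The two-sided distance bound
`M⁻¹ d_G(u,v) - A ≤ d_H(f u, f v) ≤ M d_G(u,v) + A` is stated multiplied out over `ℕ∞`. -/
structure IsQI {V V' : Type*} (M A : ℕ) (G : SimpleGraph V) (H : SimpleGraph V')
    (f : V → V') : Prop where
  upper : ∀ u v : V, H.edist (f u) (f v) ≤ (M : ℕ∞) * G.edist u v + (A : ℕ∞)
  lower : ∀ u v : V, G.edist u v ≤ (M : ℕ∞) * H.edist (f u) (f v) + (M : ℕ∞) * (A : ℕ∞)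
  dense : ∀ w : V', ∃ v : V, H.edist w (f v) ≤ (A : ℕ∞)

/-- `G` is `(M,A)`-quasi-isometric to `H`. -/
def QIsometric {V V' : Type*} (M A : ℕ) (G : SimpleGraph V) (H : SimpleGraph V') : Prop :=
  ∃ f : V → V', IsQI M A G H f

/-- `X` is a minor of `G`. -/
def HasMinor {V W : Type*} (G : SimpleGraph V) (X : SimpleGraph W) : Prop :=
  ∃ U : W → Set V,
    (∀ x, (U x).Nonempty) ∧ (∀ x, SetConn G (U x)) ∧
    (∀ ⦃x y⦄, x ≠ y → Disjoint (U x) (U y)) ∧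
    ∀ ⦃x y⦄, X.Adj x y → ∃ u ∈ U x, ∃ v ∈ U y, G.Adj u v

/-- The `(a × b)`-grid graph. -/
def gridGraph (a b : ℕ) : SimpleGraph (Fin a × Fin b) :=
  SimpleGraph.fromRel (fun u v =>
    (u.1 = v.1 ∧ u.2.1 + 1 = v.2.1) ∨ (u.2 = v.2 ∧ u.1.1 + 1 = v.1.1))

/-- A `K`-fat model of `X` in `G`: disjoint connected branch sets joined by internally
disjoint branch paths, all pairwise at distance at least `K` except for a branch path and
the branch sets of its endpoints. -/
structure FatModel {V W : Type*} (G : SimpleGraph V) (X : SimpleGraph W) (K : ℕ) where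
  branch : W → Set V
  branch_nonempty : ∀ x, (branch x).Nonempty
  branch_connected : ∀ x, SetConn G (branch x)
  branch_disjoint : ∀ ⦃x y⦄, x ≠ y → Disjoint (branch x) (branch y)
  pathEnd : ∀ ⦃x y⦄, X.Adj x y → V
  path : ∀ ⦃x y⦄ (e : X.Adj x y), G.Walk (pathEnd e) (pathEnd e.symm)
  path_isPath : ∀ ⦃x y⦄ (e : X.Adj x y), (path e).IsPath
  path_symm : ∀ ⦃x y⦄ (e : X.Adj x y), path e.symm = (path e).reverse
  pathEnd_mem : ∀ ⦃x y⦄ (e : X.Adj x y), pathEnd e ∈ branch x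
  path_meets : ∀ ⦃x y⦄ (e : X.Adj x y) (z : W) (v : V), v ∈ (path e).support → v ∈ branch z →
    (z = x ∧ v = pathEnd e) ∨ (z = y ∧ v = pathEnd e.symm)
  path_int_disjoint : ∀ ⦃x y x' y'⦄ (e : X.Adj x y) (e' : X.Adj x' y'), s(x, y) ≠ s(x', y') →
    ∀ v, v ∈ (path e).support → v ∈ (path e').support → v = pathEnd e' ∨ v = pathEnd e'.symm
  fat_branch : ∀ ⦃x y⦄, x ≠ y → (K : ℕ∞) ≤ sDist G (branch x) (branch y)
  fat_path_branch : ∀ ⦃x y⦄ (e : X.Adj x y) (z : W), z ≠ x → z ≠ y →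
    (K : ℕ∞) ≤ sDist G (walkSupp (path e)) (branch z)
  fat_paths : ∀ ⦃x y x' y'⦄ (e : X.Adj x y) (e' : X.Adj x' y'), s(x, y) ≠ s(x', y') →
    (K : ℕ∞) ≤ sDist G (walkSupp (path e)) (walkSupp (path e'))

/-- `X` is a `K`-fat minor of `G`. -/
def IsFatMinor {V W : Type*} (G : SimpleGraph V) (X : SimpleGraph W) (K : ℕ) : Prop :=
  Nonempty (FatModel G X K)

/-- `W` is a `K`-fat `n`-path-connected set in `G`. -/
def FatPathConn {V : Type*} (G : SimpleGraph V) (K n : ℕ) (W : Set V) : Prop :=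
  (∃ S : Finset V, ↑S ⊆ W ∧ 2 * n ≤ S.card) ∧
  (∀ ⦃u v : V⦄, u ∈ W → v ∈ W → u ≠ v → (K : ℕ∞) ≤ G.edist u v) ∧
  ∀ l : ℕ, l ≤ n → ∀ A B : Finset V, ↑A ⊆ W → ↑B ⊆ W → A.card = l → B.card = l →
    ∃ (a b : Fin l → V) (P : ∀ i : Fin l, G.Walk (a i) (b i)),
      (∀ i, (P i).IsPath) ∧ (∀ i, a i ∈ A ∧ b i ∈ B) ∧
      ∀ i j, i ≠ j → (K : ℕ∞) ≤ sDist G (walkSupp (P i)) (walkSupp (P j))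

end CGT

namespace Ghdm

/-- Raw vertex codes for the graphs `G_{h,d,m}`:
`path k` is the `k`-th vertex of the base path; `tree j i p` is the vertex at position `p`
of the `i`-th binary tree at level `j` (the root being position `[]`); and
`spine j i k t e s` is the `s`-th internal vertex of the spine from the `k`-th leaf of that
tree to the `e`-th element of the `t`-th local gluing set at level `j-1`. -/
inductive Raw : Type where
  | path (k : ℕ)
  | tree (j i : ℕ) (p : List Bool)
  | spine (j i k t e s : ℕ)
deriving DecidableEq

/-- `N = 2^{h+1} - 1`, the number of copies of `G_{h,d,m-1}` glued inside `G_{h,d,m}`. -/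
def NN (h : ℕ) : ℕ := 2 ^ (h + 1) - 1

/-- Canonical representative of a raw vertex code: all tree roots are identified with the
single root `tree m 1 []`, and the leftmost leaf of tree `i > 1` is identified with the
rightmost leaf of tree `i - 1` (consecutive copies are glued along these leaves). -/
def canon (h m : ℕ) : Raw → Raw
  | .tree j i p =>
    if p = [] then .tree m 1 []
    else if p = List.replicate h false ∧ 1 < i then .tree j (i - 1) (List.replicate h true)
    else .tree j i p
  | x => x

/-- The `q`-bit binary representation of `i` (most significant bit first);
`false` means "left". -/
def natToBits (q i : ℕ) : List Bool := (List.range q).map fun a => Nat.testBit i (q - 1 - a)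

/-- Position of the `k`-th leaf (1-based, from the left) in a binary tree of height `h`. -/
def leafPos (h k : ℕ) : List Bool := natToBits h (k - 1)

/-- The `e`-th element of the `g`-th gluing set `V^{jv}_g` (at level `jv`):
its element `e = 1` is an anchor of the base path, and its element `e ≥ 2` is a shared
extreme leaf of the trees at level `e`. -/
def VsetElem (h d jv g e : ℕ) : Raw :=
  if e = 1 then .path ((g - 1) * NN h ^ (jv - 1) * (d + 1))
  else if (g - 1) * NN h ^ (jv - e) = 0 then .tree e 1 (List.replicate h false)
  else .tree e ((g - 1) * NN h ^ (jv - e)) (List.replicate h true)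

/-- Valid (canonical) vertex codes of `G_{h,d,m}`. -/
def Valid (h d m : ℕ) : Raw → Prop
  | .path k => k ≤ (d + 1) * NN h ^ (m - 1)
  | .tree j i p => 2 ≤ j ∧ j ≤ m ∧ 1 ≤ i ∧ i ≤ NN h ^ (m - j) ∧ p.length ≤ h ∧
      (p = [] → j = m ∧ i = 1) ∧ (p = List.replicate h false → p ≠ [] → i = 1)
  | .spine j i k t e s => 2 ≤ j ∧ j ≤ m ∧ 1 ≤ i ∧ i ≤ NN h ^ (m - j) ∧
      1 ≤ k ∧ k ≤ 2 ^ h ∧ (t = 2 * k - 2 ∨ t = 2 * k + 1) ∧ 1 ≤ t ∧ t ≤ 2 ^ (h + 1) ∧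
      1 ≤ e ∧ e ≤ j - 1 ∧ 1 ≤ s ∧ s ≤ d

/-- Generating adjacencies between raw vertex codes: consecutive base path vertices,
parent/child in the binary trees, consecutive spine vertices, a spine and the leaf it
starts at, a spine and the gluing-set vertex it ends at (the latter collapsed to a single
edge when `d = 0`). -/
inductive rawAdj (h d : ℕ) : Raw → Raw → Prop
  | base (k : ℕ) : rawAdj h d (.path k) (.path (k + 1))
  | child (j i : ℕ) (p : List Bool) (b : Bool) : p.length < h →
      rawAdj h d (.tree j i p) (.tree j i (p ++ [b]))
  | step (j i k t e s : ℕ) : rawAdj h d (.spine j i k t e s) (.spine j i k t e (s + 1))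
  | toLeaf (j i k t e : ℕ) : rawAdj h d (.tree j i (leafPos h k)) (.spine j i k t e 1)
  | toV (j i k t e : ℕ) :
      rawAdj h d (.spine j i k t e d) (VsetElem h d (j - 1) ((i - 1) * NN h + t) e)
  | short (j i k t e : ℕ) : d = 0 → 1 ≤ k → k ≤ 2 ^ h → (t = 2 * k - 2 ∨ t = 2 * k + 1) →
      1 ≤ t → t ≤ 2 ^ (h + 1) → 1 ≤ e → e ≤ j - 1 →
      rawAdj h d (.tree j i (leafPos h k)) (VsetElem h d (j - 1) ((i - 1) * NN h + t) e)

/-- Adjacency of canonical representatives. -/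
def rel (h d m : ℕ) (x y : Raw) : Prop :=
  ∃ a b, rawAdj h d a b ∧ x = canon h m a ∧ y = canon h m b

/-- The vertex set of `G_{h,d,m}`. -/
def Verts (h d m : ℕ) : Set Raw := {x | Valid h d m x}

/-- The graph `G_{h,d,m}`. -/
def G (h d m : ℕ) : SimpleGraph (Verts h d m) :=
  (SimpleGraph.fromRel (rel h d m)).induce (Verts h d m)

/-- Lift a set of raw codes to a set of vertices of `G_{h,d,m}`. -/
def lift {h d m : ℕ} (S : Set Raw) : Set (Verts h d m) := Subtype.val ⁻¹' S

/-- The root `R(G_{h,d,m})`. -/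
def RootR (m : ℕ) : Raw := .tree m 1 []

/-- The gluing set `V^{jv}_g` of `G_{h,d,m}`, as a set of raw codes. -/
def VsetRaw (h d m jv g : ℕ) : Set Raw :=
  {x | ∃ e, 1 ≤ e ∧ e ≤ jv ∧ x = canon h m (VsetElem h d jv g e)}

/-- The set `S(G_{h,d,m})`. -/
def SsetR (h d m : ℕ) : Set Raw :=
  VsetRaw h d m (m - 1) 1 ∪ {canon h m (.tree m 1 (leafPos h 1))}

/-- The set `T(G_{h,d,m})`. -/
def TsetR (h d m : ℕ) : Set Raw :=
  VsetRaw h d m (m - 1) (2 ^ (h + 1)) ∪ {canon h m (.tree m 1 (leafPos h (2 ^ h)))}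

/-- For a vertex of the top binary tree at position `p`, the (1-based) index of the
leftmost leaf of the top tree below it. -/
def kOf (h : ℕ) (p : List Bool) : ℕ :=
  (p.foldl (fun a b => 2 * a + if b then 1 else 0) 0) * 2 ^ (h - p.length) + 1

/-- `S(Δ(x))` for the vertex `x` of the top binary tree `B(G_{h,d,m})` at position `p`. -/
def SDeltaR (h d m : ℕ) (p : List Bool) : Set Raw :=
  VsetRaw h d m (m - 1) (2 * kOf h p - 1) ∪ {canon h m (.tree m 1 (leafPos h (kOf h p)))}

/-- The leaf of `B(G_{h,d,m})` immediately to the left of the leftmost leaf below the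
top-tree vertex at position `p`; it is the unique leaf joined by spines to `S(Δ(x))`. -/
def leafLeftR (h m : ℕ) (p : List Bool) : Raw :=
  canon h m (.tree m 1 (leafPos h (kOf h p - 1)))

end Ghdm

/-!
For `h ≥ 1`, the key claim is that two sets at distance at least three which avoid the root cannot
both cross, from left to right, the same copy of `G_{h,d,c}`. By induction on `c`, no subcopy of
`G_{h,d,c-1}` is crossed by both of them. A set that does not cross a subcopy has to bypass it
through the binary tree, so at least one of the two sets joins leaves on both sides of it inside the
tree. Going up the tree, the block of leaves below each node is spanned in the same sense by one of
the two sets. At the root this is impossible.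

The vertices of `V_i^j` have distinct levels. Ten of them would therefore give a level `c` with five
vertices of level at most `c` and five above it. A walk from the former to the latter contains the
root, contains the unique leaf whose spines lead to the position of `V_i^j`, or crosses one of the
two copies of `G_{h,d,c}` that meet there. Each of these four obstacles can be used by at most one
of the pairwise distant walks, so there are at most four such walks.
-/

namespace Ghdm

/-! ### Walks inside a set -/

section Joined

variable {α : Type*} {r : α → α → Prop} {S : Set α} {a b c : α}

/-- There is a walk from `a` to `b` along `r` all of whose vertices, ends included, lie in `S`. -/
def Joined (r : α → α → Prop) (S : Set α) (a b : α) : Prop :=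
  a ∈ S ∧ Relation.ReflTransGen (fun x y => x ∈ S ∧ y ∈ S ∧ r x y) a b

theorem Joined.left_mem (hab : Joined r S a b) : a ∈ S := hab.1

theorem Joined.refl (ha : a ∈ S) : Joined r S a a := ⟨ha, .refl⟩

theorem Joined.trans (hab : Joined r S a b) (hbc : Joined r S b c) : Joined r S a c :=
  ⟨hab.1, hab.2.trans hbc.2⟩

theorem Joined.of_adj (ha : a ∈ S) (hb : b ∈ S) (h : r a b) : Joined r S a b :=
  ⟨ha, .single ⟨ha, hb, h⟩⟩

theorem Joined.tail (hab : Joined r S a b) (hc : c ∈ S) (h : r b c) : Joined r S a c := by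
  refine ⟨hab.1, ?_⟩
  rcases hab.2.cases_tail with rfl | ⟨x, -, hx⟩
  · exact .single ⟨hab.1, hc, h⟩
  · exact hab.2.tail ⟨hx.2.1, hc, h⟩

theorem Joined.right_mem (hab : Joined r S a b) : b ∈ S := by
  rcases hab.2.cases_tail with rfl | ⟨x, -, hx⟩
  · exact hab.1
  · exact hx.2.1

theorem Joined.symm [Std.Symm r] (hab : Joined r S a b) : Joined r S b a := by
  have : Std.Symm fun x y => x ∈ S ∧ y ∈ S ∧ r x y :=
    ⟨fun x y hxy => ⟨hxy.2.1, hxy.1, Std.Symm.symm _ _ hxy.2.2⟩⟩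
  exact ⟨hab.right_mem, Std.Symm.symm _ _ hab.2⟩

theorem Joined.exists_exit {p : α → Prop} (hab : Joined r S a b) (ha : p a) (hb : ¬ p b) :
    ∃ x y, p x ∧ ¬ p y ∧ r x y ∧ Joined r S a x ∧ Joined r S y b := by
  obtain ⟨haS, hab⟩ := hab
  induction hab with
  | refl => exact absurd ha hb
  | @tail c b _ hcb ih =>
    by_cases hc : p c
    · exact ⟨c, b, hc, hb, hcb.2.2, ⟨haS, ‹_›⟩, .refl hcb.2.1⟩
    · obtain ⟨x, y, hx, hy, hxy, hax, hyc⟩ := ih hc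
      exact ⟨x, y, hx, hy, hxy, hax, hyc.tail hcb.2.1 hcb.2.2⟩

theorem Joined.preserves {p : α → Prop} (hab : Joined r S a b)
    (hp : ∀ x ∈ S, ∀ y ∈ S, r x y → p x → p y) (ha : p a) : p b := by
  by_contra hb
  obtain ⟨x, y, hx, hy, hxy, hax, hyb⟩ := hab.exists_exit ha hb
  exact hy (hp x hax.right_mem y hyb.left_mem hxy hx)

end Joined

/-! ### Separated node sets of a binary tree -/

/-- The parent of a node of a binary tree. The node `(s, u)` is the `u`-th one, counted from zero,
at height `s` above the leaves. -/
def parent (a : ℕ × ℕ) : ℕ × ℕ := (a.1 + 1, a.2 / 2)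

/-- Adjacency in the infinite binary tree with the nodes `(s, u)`. -/
def TreeAdj (a b : ℕ × ℕ) : Prop := b = parent a ∨ a = parent b

instance : Std.Symm TreeAdj := ⟨fun _ _ => Or.symm⟩

/-- The nodes of the subtree rooted at `(s, w)`. -/
def subtree (s w : ℕ) : Set (ℕ × ℕ) := {a | a.1 ≤ s ∧ a.2 / 2 ^ (s - a.1) = w}

/-- Some walk in `R` joins a leaf weakly left of all leaves below `(s, w)` to a leaf weakly right
of all of them. -/
def Covers (R : Set (ℕ × ℕ)) (s w : ℕ) : Prop :=
  ∃ u v, u ≤ w * 2 ^ s ∧ (w + 1) * 2 ^ s ≤ v + 1 ∧ Joined TreeAdj R (0, u) (0, v)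

section Tree

variable {R : Set (ℕ × ℕ)} {a b : ℕ × ℕ} {s w u v : ℕ}

theorem TreeAdj.eq_of_exit_subtree (h : TreeAdj a b) (ha : a ∈ subtree s w)
    (hb : b ∉ subtree s w) : a = (s, w) ∧ b = parent (s, w) := by
  obtain ⟨a₁, a₂⟩ := a
  obtain ⟨b₁, b₂⟩ := b
  have div_div (x i : ℕ) : x / 2 / 2 ^ i = x / 2 ^ (i + 1) := by
    rw [Nat.div_div_eq_div_mul, pow_succ']
  simp only [TreeAdj, parent, Prod.mk.injEq, subtree, Set.mem_ofPred_eq] at h ha hb ⊢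
  rcases h with ⟨rfl, rfl⟩ | ⟨rfl, rfl⟩
  · obtain rfl | hlt := ha.1.eq_or_lt
    · simp_all
    · refine absurd ⟨hlt, ?_⟩ hb
      rw [div_div, ← ha.2]
      congr 2; omega
  · refine absurd ⟨by omega, ?_⟩ hb
    rw [← ha.2, div_div]
    congr 2; omega

theorem Joined.ancestor (h : Joined TreeAdj R (0, u) (0, v)) (huv : u / 2 ^ s ≠ v / 2 ^ s) :
    Joined TreeAdj R (0, u) (s, u / 2 ^ s) ∧ Joined TreeAdj R (0, u) (s + 1, u / 2 ^ (s + 1)) := by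
  obtain ⟨x, y, hx, hy, hxy, hux, hyv⟩ := h.exists_exit (p := (· ∈ subtree s (u / 2 ^ s)))
    (by simp [subtree]) (by simpa [subtree] using huv.symm)
  obtain ⟨rfl, rfl⟩ := hxy.eq_of_exit_subtree hx hy
  refine ⟨hux, ?_⟩
  rw [pow_succ, ← Nat.div_div_eq_div_mul]
  exact hux.tail hyv.left_mem hxy

theorem Joined.top_of_block_ends (h : Joined TreeAdj R (0, u) (0, v)) (hu : u = w * 2 ^ s)
    (hv : v + 1 = (w + 1) * 2 ^ s) : Joined TreeAdj R (0, u) (s, w) := by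
  cases s with
  | zero =>
    obtain rfl : u = w := by simpa using hu
    exact .refl h.left_mem
  | succ s =>
    have hs : 0 < 2 ^ s := by positivity
    have hu₁ : u / 2 ^ s = 2 * w := by
      rw [hu, pow_succ', ← mul_assoc, mul_comm w, Nat.mul_div_cancel _ hs]
    have hu₂ : u / 2 ^ (s + 1) = w := by rw [hu, Nat.mul_div_cancel _ (by positivity)]
    have hv₁ : v / 2 ^ s = 2 * w + 1 := by
      rw [Nat.div_eq_iff hs]
      rw [pow_succ'] at hv
      constructor <;> grind
    exact hu₂ ▸ (h.ancestor (by omega)).2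

theorem Covers.left_half (hc : Covers R s (2 * w)) (hnot : ¬ Covers R (s + 1) w) :
    ∃ u ≤ w * 2 ^ (s + 1), Joined TreeAdj R (0, u) (s + 1, w) ∨
      Joined TreeAdj R (0, u) (s, 2 * w) ∧ (0, (2 * w + 1) * 2 ^ s - 1) ∈ R := by
  obtain ⟨u, v, hu, hv, huv⟩ := hc
  have hs : 0 < 2 ^ s := by positivity
  have hv' : v + 1 < (w + 1) * 2 ^ (s + 1) := by
    by_contra! hle
    exact hnot ⟨u, v, hu.trans_eq (by ring), hle, huv⟩
  refine ⟨u, hu.trans_eq (by ring), ?_⟩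
  by_cases hdiv : u / 2 ^ s = v / 2 ^ s
  · have hu₁ : u / 2 ^ s ≤ 2 * w := Nat.div_le_of_le_mul (by linarith)
    have hv₁ : 2 * w ≤ v / 2 ^ s := (Nat.le_div_iff_mul_le hs).2 (by grind)
    have hu₂ := Nat.div_mul_le_self u (2 ^ s)
    have hv₂ := Nat.lt_mul_of_div_lt (show v / 2 ^ s < 2 * w + 1 by omega) hs
    rw [show u / 2 ^ s = 2 * w by omega] at hu₂
    obtain rfl : v = (2 * w + 1) * 2 ^ s - 1 := by omega
    exact .inr ⟨huv.top_of_block_ends (by omega) (by omega), huv.right_mem⟩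
  · have hv₁ : v / 2 ^ (s + 1) = w :=
      Nat.div_eq_of_lt_le (by rw [pow_succ']; linarith) (by omega)
    exact .inl (huv.trans (hv₁ ▸ (huv.symm.ancestor (Ne.symm hdiv)).2))

theorem Covers.right_half (hc : Covers R s (2 * w + 1)) (hnot : ¬ Covers R (s + 1) w) :
    ∃ v, (w + 1) * 2 ^ (s + 1) ≤ v + 1 ∧ (Joined TreeAdj R (s + 1, w) (0, v) ∨
      Joined TreeAdj R (s, 2 * w + 1) (0, v) ∧ (0, (2 * w + 1) * 2 ^ s) ∈ R) := by
  obtain ⟨u, v, hu, hv, huv⟩ := hc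
  have hs : 0 < 2 ^ s := by positivity
  have hu' : w * 2 ^ (s + 1) < u := by
    by_contra! hle
    exact hnot ⟨u, v, hle, by grind, huv⟩
  refine ⟨v, by grind, ?_⟩
  by_cases hdiv : u / 2 ^ s = v / 2 ^ s
  · have hu₁ : u / 2 ^ s ≤ 2 * w + 1 := Nat.div_le_of_le_mul (by linarith)
    have hv₁ : 2 * w + 1 ≤ v / 2 ^ s := (Nat.le_div_iff_mul_le hs).2 (by grind)
    have hu₂ := Nat.div_mul_le_self u (2 ^ s)
    have hv₂ := Nat.lt_mul_of_div_lt (show v / 2 ^ s < 2 * w + 2 by omega) hs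
    rw [show u / 2 ^ s = 2 * w + 1 by omega] at hu₂
    obtain rfl : u = (2 * w + 1) * 2 ^ s := by omega
    exact .inr ⟨(huv.top_of_block_ends rfl (by grind)).symm.trans huv, huv.left_mem⟩
  · have hu₁ : u / 2 ^ (s + 1) = w :=
      Nat.div_eq_of_lt_le (by omega) (by rw [pow_succ']; linarith)
    exact .inl ((hu₁ ▸ (huv.ancestor hdiv).2).symm.trans huv)

theorem Joined.covers_of_notMem (huv : Joined TreeAdj R (0, u) (0, v))
    (hw : (s + 1, w) ∉ R) (hu : u < (2 * w + 1) * 2 ^ s) (hv : (2 * w + 1) * 2 ^ s ≤ v) :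
    Covers R (s + 1) w := by
  have hs : 0 < 2 ^ s := by positivity
  have hne : u / 2 ^ s ≠ v / 2 ^ s := by
    have := (Nat.div_lt_iff_lt_mul hs).2 hu
    have := (Nat.le_div_iff_mul_le hs).2 hv
    omega
  refine ⟨u, v, ?_, ?_, huv⟩ <;> by_contra! hlt
  · have hu₁ : u / 2 ^ (s + 1) = w :=
      Nat.div_eq_of_lt_le (by omega) (by rw [pow_succ']; linarith)
    exact hw (hu₁ ▸ (huv.ancestor hne).2.right_mem)
  · have hv₁ : v / 2 ^ (s + 1) = w :=
      Nat.div_eq_of_lt_le (by rw [pow_succ']; linarith) (by omega)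
    exact hw (hv₁ ▸ (huv.symm.ancestor hne.symm).2.right_mem)

end Tree

theorem NN_add_one (h : ℕ) : NN h + 1 = 2 * 2 ^ h := by
  have : 0 < 2 ^ (h + 1) := by positivity
  rw [NN, ← pow_succ']
  omega

/-- Two node sets of the binary tree at distance at least three. -/
structure TreeApart (P Q : Set (ℕ × ℕ)) : Prop where
  parent_ne : ∀ a ∈ P, ∀ b ∈ Q, parent a ≠ parent b
  not_adj : ∀ a ∈ P, ∀ b ∈ Q, ¬ TreeAdj a b

/-- The nodes other than the root of the binary tree of height `h`. -/
def properNodes (h : ℕ) : Set (ℕ × ℕ) := {a | a.1 < h ∧ a.2 < 2 ^ (h - a.1)}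

/-- The properties of the trace `R` left on the tree of a copy of `G_{h,d,c+1}` by a connected set
that crosses this copy and avoids the root; `C t` says that the set also crosses the `t`-th of the
`N` copies of `G_{h,d,c}` inside. The set has to bypass uncrossed copies through the tree, and the
leaf `(0, u)` is attached to the ends `2 * u - 1` and `2 * u + 2` of these copies, all indices
being counted from zero. -/
structure CrossingTrace (h : ℕ) (R : Set (ℕ × ℕ)) (C : ℕ → Prop) : Prop where
  subset_properNodes : R ⊆ properNodes h
  bypass : ∀ t < NN h, ¬ C t →
    ∃ u v, Joined TreeAdj R (0, u) (0, v) ∧ 2 * u ≤ t + 1 ∧ t ≤ 2 * v + 1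
  bypass_three : ∀ k, k + 1 < 2 ^ h → ¬ C (2 * k) → ¬ C (2 * k + 1) → ¬ C (2 * k + 2) →
    ∃ u v, Joined TreeAdj R (0, u) (0, v) ∧ u ≤ k ∧ k + 1 ≤ v

section

variable {P Q R R' : Set (ℕ × ℕ)} {C C' : ℕ → Prop} {h s w : ℕ}

theorem TreeApart.symm (hPQ : TreeApart P Q) : TreeApart Q P :=
  ⟨fun a ha b hb => (hPQ.parent_ne b hb a ha).symm,
    fun a ha b hb hab => hPQ.not_adj b hb a ha (Or.symm hab)⟩

theorem TreeApart.notMem {a : ℕ × ℕ} (hPQ : TreeApart P Q) (ha : a ∈ P) : a ∉ Q :=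
  fun ha' => hPQ.parent_ne a ha a ha' rfl

theorem treeAdj_left_child (s w : ℕ) : TreeAdj (s, 2 * w) (s + 1, w) := .inl (by simp [parent])

theorem treeAdj_right_child (s w : ℕ) : TreeAdj (s, 2 * w + 1) (s + 1, w) :=
  .inl (by simp only [parent, Prod.mk.injEq, true_and]; omega)

theorem Covers.parent_notMem_of_halves (hl : Covers R s (2 * w)) (hr : Covers R s (2 * w + 1))
    (hnot : ¬ Covers R (s + 1) w) : (s + 1, w) ∉ R := by
  intro hw
  obtain ⟨u, hu, hul⟩ := hl.left_half hnot
  obtain ⟨v, hv, hvr⟩ := hr.right_half hnot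
  have hleft : Joined TreeAdj R (0, u) (s + 1, w) :=
    hul.elim id fun hul => hul.1.tail hw (treeAdj_left_child s w)
  have hright : Joined TreeAdj R (s + 1, w) (0, v) :=
    hvr.elim id fun hvr => (hvr.1.symm.tail hw (treeAdj_right_child s w)).symm
  exact hnot ⟨u, v, hu, hv, hleft.trans hright⟩

/-- The middle leaves of the block below `(s + 1, w)` lie in `R`, so that a bypass in `R'` of a
copy between them spans the middle of the block without using the node `(s + 1, w)`. -/
theorem CrossingTrace.covers_of_halves (hR : CrossingTrace h R C) (hR' : CrossingTrace h R' C')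
    (hRR' : TreeApart R R') (hC : ∀ t < NN h, ¬ (C t ∧ C' t)) (hl : Covers R s (2 * w))
    (hr : Covers R s (2 * w + 1)) : Covers R (s + 1) w ∨ Covers R' (s + 1) w := by
  by_contra! ⟨hnot, hnot'⟩
  have hw : (s + 1, w) ∉ R := hl.parent_notMem_of_halves hr hnot
  obtain ⟨_, _, hul | ⟨hul, hk⟩⟩ := hl.left_half hnot
  · exact hw hul.right_mem
  obtain ⟨_, _, hvr | ⟨-, hk'⟩⟩ := hr.right_half hnot
  · exact hw hvr.left_mem
  have hw' : (s + 1, w) ∉ R' := fun hw' =>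
    hRR'.not_adj _ hul.right_mem _ hw' (treeAdj_left_child s w)
  obtain ⟨k, hkmid⟩ : ∃ k, k + 1 = (2 * w + 1) * 2 ^ s := Nat.exists_add_one_eq.2 (by positivity)
  rw [← hkmid, Nat.add_sub_cancel] at hk
  rw [← hkmid] at hk'
  have hkh : k + 1 < 2 ^ h := by simpa using (hR.subset_properNodes hk').2
  have not_crossed (t : ℕ) (ht₁ : 2 * k ≤ t) (ht₂ : t ≤ 2 * k + 2) : ¬ C t := by
    intro ht
    have hth : t < NN h := by have := NN_add_one h; omega
    obtain ⟨u, v, huv, hu, hv⟩ := hR'.bypass t hth fun ht' => hC t hth ⟨ht, ht'⟩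
    have huk : u ≠ k + 1 := by rintro rfl; exact hRR'.notMem hk' huv.left_mem
    have hvk : v ≠ k := by rintro rfl; exact hRR'.notMem hk huv.right_mem
    exact hnot' (huv.covers_of_notMem hw' (by omega) (by omega))
  obtain ⟨u, v, huv, hu, hv⟩ := hR.bypass_three k hkh (not_crossed _ (by omega) (by omega))
    (not_crossed _ (by omega) (by omega)) (not_crossed _ (by omega) (by omega))
  exact hnot (huv.covers_of_notMem hw (by omega) (by omega))

theorem TreeApart.covers_of_halves (hPQ : TreeApart P Q) (hl : Covers P s (2 * w))
    (hr : Covers Q s (2 * w + 1)) : Covers P (s + 1) w ∨ Covers Q (s + 1) w := by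
  by_contra! ⟨hP, hQ⟩
  obtain ⟨_, _, hul⟩ := hl.left_half hP
  obtain ⟨_, _, hvr⟩ := hr.right_half hQ
  rcases hul with hul | ⟨hul, -⟩ <;> rcases hvr with hvr | ⟨hvr, -⟩
  · exact hPQ.notMem hul.right_mem hvr.left_mem
  · exact hPQ.not_adj _ hul.right_mem _ hvr.left_mem (Or.symm (treeAdj_right_child s w))
  · exact hPQ.not_adj _ hul.right_mem _ hvr.left_mem (treeAdj_left_child s w)
  · refine hPQ.parent_ne _ hul.right_mem _ hvr.left_mem ?_
    simp only [parent, Prod.mk.injEq, true_and]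
    omega

theorem CrossingTrace.covers_or_covers (hP : CrossingTrace h P C) (hQ : CrossingTrace h Q C')
    (hPQ : TreeApart P Q) (hC : ∀ t < NN h, ¬ (C t ∧ C' t)) (hs : s ≤ h) (hw : w < 2 ^ (h - s)) :
    Covers P s w ∨ Covers Q s w := by
  induction s generalizing w with
  | zero =>
    have hwN : 2 * w < NN h := by
      have := NN_add_one h
      rw [Nat.sub_zero] at hw
      omega
    have covers_of_bypass {R : Set (ℕ × ℕ)} (hR : ∃ u v, Joined TreeAdj R (0, u) (0, v) ∧
        2 * u ≤ 2 * w + 1 ∧ 2 * w ≤ 2 * v + 1) : Covers R 0 w := by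
      obtain ⟨u, v, huv, hu, hv⟩ := hR
      exact ⟨u, v, by omega, by omega, huv⟩
    by_cases hCw : C (2 * w)
    · exact .inr (covers_of_bypass (hQ.bypass _ hwN fun hCw' => hC _ hwN ⟨hCw, hCw'⟩))
    · exact .inl (covers_of_bypass (hP.bypass _ hwN hCw))
  | succ s ih =>
    have hpow : 2 ^ (h - s) = 2 * 2 ^ (h - (s + 1)) := by rw [← pow_succ']; congr 1; omega
    rcases ih (by omega) (w := 2 * w) (by omega) with hl | hl <;>
      rcases ih (by omega) (w := 2 * w + 1) (by omega) with hr | hr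
    · exact hP.covers_of_halves hQ hPQ hC hl hr
    · exact hPQ.covers_of_halves hl hr
    · exact (hPQ.symm.covers_of_halves hl hr).symm
    · exact (hQ.covers_of_halves hP hPQ.symm (fun t ht hCt => hC t ht hCt.symm) hl hr).symm

theorem CrossingTrace.not_covers_root (hh : 1 ≤ h) (hR : CrossingTrace h R C) :
    ¬ Covers R h 0 := by
  rintro ⟨u, v, hu, hv, huv⟩
  obtain ⟨s, rfl⟩ : ∃ s, h = s + 1 := ⟨h - 1, by omega⟩
  have hs : 0 < 2 ^ s := by positivity
  have hne : u / 2 ^ s ≠ v / 2 ^ s := by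
    have hu₀ : u / 2 ^ s = 0 := by rw [show u = 0 by omega, Nat.zero_div]
    have hv₁ : 1 ≤ v / 2 ^ s := (Nat.le_div_iff_mul_le hs).2 (by rw [pow_succ'] at hv; omega)
    omega
  have := (hR.subset_properNodes (huv.ancestor hne).2.right_mem).1
  omega

theorem TreeApart.false_of_crossingTrace (hPQ : TreeApart P Q) (hh : 1 ≤ h)
    (hP : CrossingTrace h P C) (hQ : CrossingTrace h Q C') (hC : ∀ t < NN h, ¬ (C t ∧ C' t)) :
    False :=
  (hP.covers_or_covers hQ hPQ hC le_rfl (by simp)).elim (hP.not_covers_root hh)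
    (hQ.not_covers_root hh)

end

/-! ### Tree vertices and their positions -/

theorem natToBits_succ (n u : ℕ) :
    natToBits (n + 1) u = natToBits n (u / 2) ++ [u.testBit 0] := by
  simp only [natToBits, List.range_succ, List.map_append, List.map_cons, List.map_nil]
  congr 1
  · refine List.map_congr_left fun a ha => ?_
    rw [List.mem_range] at ha
    rw [Nat.testBit_div_two]
    congr 1; omega
  · simp

theorem length_natToBits (n u : ℕ) : (natToBits n u).length = n := by simp [natToBits]

theorem natToBits_inj {n u v : ℕ} (hu : u < 2 ^ n) (hv : v < 2 ^ n)
    (huv : natToBits n u = natToBits n v) : u = v := by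
  induction n generalizing u v with
  | zero => omega
  | succ n ih =>
    rw [natToBits_succ, natToBits_succ] at huv
    obtain ⟨hinit, hlast⟩ := List.append_inj' huv rfl
    have hdiv := ih (by omega) (by omega) hinit
    simp only [Nat.testBit_zero, List.cons.injEq, decide_eq_decide, and_true] at hlast
    omega

theorem exists_eq_natToBits (p : List Bool) : ∃ u < 2 ^ p.length, p = natToBits p.length u := by
  induction p using List.reverseRecOn with
  | nil => exact ⟨0, by simp [natToBits]⟩
  | append_singleton p b ih =>
    obtain ⟨u, hu, hp⟩ := ih
    have hb := b.toNat_lt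
    refine ⟨2 * u + b.toNat, ?_, ?_⟩
    · rw [List.length_append, List.length_singleton, pow_succ']
      omega
    · rw [List.length_append, List.length_singleton, natToBits_succ,
        show (2 * u + b.toNat) / 2 = u by omega, ← hp]
      cases b <;> simp

theorem natToBits_zero (n : ℕ) : natToBits n 0 = List.replicate n false := by
  induction n with
  | zero => simp [natToBits]
  | succ n ih => rw [natToBits_succ, List.replicate_succ', Nat.zero_div, ih, Nat.zero_testBit]

theorem natToBits_two_pow_sub_one (n : ℕ) :
    natToBits n (2 ^ n - 1) = List.replicate n true := by
  induction n with
  | zero => simp [natToBits]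
  | succ n ih =>
    have hn : 0 < 2 ^ n := by positivity
    rw [natToBits_succ, List.replicate_succ', show (2 ^ (n + 1) - 1) / 2 = 2 ^ n - 1 by omega, ih]
    simp only [Nat.testBit_zero, List.append_cancel_left_eq, List.cons.injEq, decide_eq_true_eq,
      and_true]
    omega

theorem replicate_true_ne_replicate_false {h : ℕ} (hh : 1 ≤ h) :
    List.replicate h true ≠ List.replicate h false := by
  simpa [List.replicate_inj] using Nat.one_le_iff_ne_zero.1 hh

/-- The vertex at the node `a` of the `q`-th tree of level `e`, with `q` counted from zero. -/
def node (h m e q : ℕ) (a : ℕ × ℕ) : Raw :=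
  canon h m (.tree e (q + 1) (natToBits (h - a.1) a.2))

/-- The number `c` such that the smallest copies containing a vertex are copies of `G_{h,d,c}`. The
root lies in all copies, but has level `m`. -/
def level : Raw → ℕ
  | .path _ => 1
  | .tree j _ _ => j
  | .spine j _ _ _ _ _ => j

/-- The number of segments between consecutive anchors of the base path in a copy of
`G_{h,d,c}`. -/
def width (h c : ℕ) : ℕ := NN h ^ (c - 1)

/-- The left end of the interval of base path segments below the smallest copy containing a vertex.
This interval is degenerate for the vertices shared by consecutive copies. -/
def leftPos (h d : ℕ) : Raw → ℕ
  | .path k => k / (d + 1)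
  | .tree j i p =>
    if p = List.replicate h true then i * width h j else (i - 1) * width h j
  | .spine j i _ _ _ _ => (i - 1) * width h j

/-- The right end of the interval that starts at `leftPos`. -/
def rightPos (h d : ℕ) : Raw → ℕ
  | .path k => (k + d) / (d + 1)
  | .tree j i p =>
    if p = List.replicate h false then (i - 1) * width h j else i * width h j
  | .spine j i _ _ _ _ => i * width h j

section

variable {h d m e q : ℕ} {a b : ℕ × ℕ}

theorem one_le_of_mem_properNodes (ha : a ∈ properNodes h) : 1 ≤ h := by have := ha.1; omega

theorem leaf_mem_properNodes {u : ℕ} (hh : 1 ≤ h) (hu : u < 2 ^ h) : (0, u) ∈ properNodes h :=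
  ⟨hh, hu⟩

theorem parent_mem_properNodes (ha : a ∈ properNodes h) (ha' : a.1 + 1 < h) :
    parent a ∈ properNodes h := by
  have hpow : 2 ^ (h - a.1) = 2 * 2 ^ (h - (a.1 + 1)) := by rw [← pow_succ']; congr 1; omega
  have := ha.2
  exact ⟨ha', show a.2 / 2 < 2 ^ (h - (a.1 + 1)) by omega⟩

theorem natToBits_ne_nil (ha : a ∈ properNodes h) : natToBits (h - a.1) a.2 ≠ [] := by
  have := ha.1
  rw [← List.length_pos_iff, length_natToBits]
  omega

theorem natToBits_eq_replicate_iff (ha : a ∈ properNodes h) {c : Bool} {u : ℕ} (hu : u < 2 ^ h)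
    (hc : natToBits h u = List.replicate h c) :
    natToBits (h - a.1) a.2 = List.replicate h c ↔ a = (0, u) := by
  obtain ⟨s, v⟩ := a
  obtain ⟨hs, hv⟩ := ha
  simp only [Prod.mk.injEq]
  constructor
  · intro heq
    have hlen := congrArg List.length heq
    rw [length_natToBits, List.length_replicate] at hlen
    obtain rfl : s = 0 := by omega
    exact ⟨rfl, natToBits_inj hv hu (heq.trans hc.symm)⟩
  · rintro ⟨rfl, rfl⟩
    exact hc

theorem natToBits_eq_replicate_false_iff (ha : a ∈ properNodes h) :
    natToBits (h - a.1) a.2 = List.replicate h false ↔ a = (0, 0) :=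
  natToBits_eq_replicate_iff ha (by positivity) (natToBits_zero h)

theorem natToBits_eq_replicate_true_iff (ha : a ∈ properNodes h) :
    natToBits (h - a.1) a.2 = List.replicate h true ↔ a = (0, 2 ^ h - 1) :=
  natToBits_eq_replicate_iff ha (by simp) (natToBits_two_pow_sub_one h)

theorem node_eq (ha : a ∈ properNodes h) :
    node h m e q a = if a = (0, 0) ∧ 0 < q then .tree e q (List.replicate h true)
      else .tree e (q + 1) (natToBits (h - a.1) a.2) := by
  simp only [node, canon, natToBits_ne_nil ha, if_false, natToBits_eq_replicate_false_iff ha,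
    Nat.lt_add_left_iff_pos, Nat.add_sub_cancel]

theorem level_node (ha : a ∈ properNodes h) : level (node h m e q a) = e := by
  rw [node_eq ha]
  split_ifs <;> rfl

theorem leftPos_node (ha : a ∈ properNodes h) : leftPos h d (node h m e q a) =
    if a = (0, 2 ^ h - 1) then (q + 1) * width h e else q * width h e := by
  have hpow : 2 ^ 1 ≤ 2 ^ h := Nat.pow_le_pow_right (by omega) (one_le_of_mem_properNodes ha)
  rw [node_eq ha]
  split_ifs with hleft hright hright
  · simp only [hleft.1, Prod.mk.injEq, true_and] at hright
    omega
  · simp [leftPos]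
  · simp [leftPos, (natToBits_eq_replicate_true_iff ha).2 hright]
  · simp [leftPos, natToBits_eq_replicate_true_iff ha, hright]

theorem rightPos_node (ha : a ∈ properNodes h) : rightPos h d (node h m e q a) =
    if a = (0, 0) then q * width h e else (q + 1) * width h e := by
  have hh := replicate_true_ne_replicate_false (one_le_of_mem_properNodes ha)
  rw [node_eq ha]
  split_ifs with hq hleft hleft
  · simp [rightPos, hh]
  · exact absurd hq.1 hleft
  · simp [rightPos, (natToBits_eq_replicate_false_iff ha).2 hleft]
  · simp [rightPos, natToBits_eq_replicate_false_iff ha, hleft]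

theorem node_injOn : Set.InjOn (node h m e q) (properNodes h) := by
  rintro ⟨s, u⟩ ha ⟨s', u'⟩ hb hab
  rw [node_eq ha, node_eq hb] at hab
  split_ifs at hab with hl hr hr
  · exact hl.1.trans hr.1.symm
  · simp at hab
  · simp at hab
  · simp only [Raw.tree.injEq, true_and] at hab
    have hlen := congrArg List.length hab
    rw [length_natToBits, length_natToBits] at hlen
    obtain rfl : s = s' := by have := ha.1; have := hb.1; omega
    exact congrArg (s, ·) (natToBits_inj ha.2 hb.2 hab)

theorem node_ne_spine {j i k t f s : ℕ} : node h m e q a ≠ .spine j i k t f s := by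
  unfold node canon
  grind

theorem leftPos_le_rightPos (hh : 1 ≤ h) (x : Raw) : leftPos h d x ≤ rightPos h d x := by
  cases x with
  | path k => exact Nat.div_le_div_right (by omega)
  | tree j i p =>
    have := replicate_true_ne_replicate_false hh
    have : (i - 1) * width h j ≤ i * width h j := Nat.mul_le_mul_right _ (by omega)
    simp only [leftPos, rightPos]
    grind
  | spine j i => exact Nat.mul_le_mul_right _ (by omega)

end

/-! ### Copies and columns -/

/-- The vertices, except for the root, of the `i`-th copy of `G_{h,d,c}`, with `i` counted from
zero. -/
def copy (h d c i : ℕ) : Set Raw :=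
  {w | level w ≤ c ∧ i * width h c ≤ leftPos h d w ∧ rightPos h d w ≤ (i + 1) * width h c}

/-- The vertices of level at most `c` at the position `x`. For `x = i * width h c` this is the set
`V_{i+1}^c` shared by the copies `i - 1` and `i` of `G_{h,d,c}`. -/
def column (h d c x : ℕ) : Set Raw := {w | level w ≤ c ∧ leftPos h d w = x ∧ rightPos h d w = x}

/-- The `f`-th vertex of the set `V_g^e`. -/
def gluingVertex (h d m e g f : ℕ) : Raw := canon h m (VsetElem h d e g f)

section

variable {h d m c e i j n q x : ℕ} {w : Raw}

theorem NN_pos (h : ℕ) : 0 < NN h := by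
  have := NN_add_one h
  have : 0 < 2 ^ h := by positivity
  omega

theorem width_pos (h c : ℕ) : 0 < width h c := Nat.pow_pos (NN_pos h)

theorem width_succ (hc : 1 ≤ c) : width h (c + 1) = NN h * width h c := by
  rw [width, width, ← pow_succ']
  congr 1; omega

theorem pow_mul_width (he : 1 ≤ e) (hec : e ≤ c) :
    NN h ^ (c - e) * width h e = width h c := by
  rw [width, width, ← pow_add]
  congr 1; omega

theorem mem_column_of_copy_of_copy (hh : 1 ≤ h) (hij : i < j) (hi : w ∈ copy h d c i)
    (hj : w ∈ copy h d c j) : j = i + 1 ∧ w ∈ column h d c (j * width h c) := by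
  have hw := leftPos_le_rightPos (d := d) hh w
  obtain ⟨hlevel, -, hright⟩ := hi
  obtain ⟨-, hleft, -⟩ := hj
  have : j ≤ i + 1 := Nat.le_of_mul_le_mul_right (by omega) (width_pos h c)
  obtain rfl : j = i + 1 := by omega
  exact ⟨rfl, hlevel, by omega, by omega⟩

theorem mem_copy_iff_of_mem_column (hw : w ∈ column h d c (n * width h c)) :
    w ∈ copy h d c j ↔ n = j ∨ n = j + 1 := by
  obtain ⟨hlevel, hleft, hright⟩ := hw
  have : j * width h c ≤ n * width h c ↔ j ≤ n := Nat.mul_le_mul_right_iff (width_pos h c)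
  have : n * width h c ≤ (j + 1) * width h c ↔ n ≤ j + 1 := Nat.mul_le_mul_right_iff (width_pos h c)
  simp only [copy, Set.mem_ofPred_eq, hlevel, hleft, hright, true_and]
  omega

theorem copy_subset_copy (he : 1 ≤ e) (hec : e ≤ c) :
    copy h d e q ⊆ copy h d c (q / NN h ^ (c - e)) := by
  rintro w ⟨hlevel, hleft, hright⟩
  have hpos : 0 < NN h ^ (c - e) := Nat.pow_pos (NN_pos h)
  refine ⟨by omega, ?_, ?_⟩ <;> rw [← pow_mul_width he hec, ← mul_assoc]
  · exact (Nat.mul_le_mul_right _ (Nat.div_mul_le_self _ _)).trans hleft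
  · exact hright.trans (Nat.mul_le_mul_right _ (Nat.lt_mul_of_div_lt (Nat.lt_succ_self _) hpos))

theorem node_mem_copy {a : ℕ × ℕ} (ha : a ∈ properNodes h) :
    node h m e q a ∈ copy h d e q := by
  have : q * width h e ≤ (q + 1) * width h e := Nat.mul_le_mul_right _ (by omega)
  refine ⟨(level_node ha).le, ?_, ?_⟩
  · rw [leftPos_node ha]; split_ifs <;> omega
  · rw [rightPos_node ha]; split_ifs <;> omega

theorem spine_mem_copy {k t f s : ℕ} : Raw.spine e (q + 1) k t f s ∈ copy h d e q :=
  ⟨le_rfl, le_rfl, le_rfl⟩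

theorem gluingVertex_eq (hh : 1 ≤ h) {f : ℕ} :
    gluingVertex h d m e q f = VsetElem h d e q f := by
  have hne : h ≠ 0 := by omega
  unfold gluingVertex VsetElem
  split_ifs
  · rfl
  · simp [canon, hne]
  · simp [canon, hne, replicate_true_ne_replicate_false hh]

theorem level_gluingVertex (hh : 1 ≤ h) {f : ℕ} : level (gluingVertex h d m e q f) = f := by
  rw [gluingVertex_eq hh, VsetElem]
  split_ifs <;> simp [level, *]

theorem gluingVertex_mem_column (hh : 1 ≤ h) {f : ℕ} (hf : 1 ≤ f) (hfe : f ≤ e) :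
    gluingVertex h d m e (n + 1) f ∈ column h d e (n * width h e) := by
  refine ⟨(level_gluingVertex hh).trans_le hfe, ?_⟩
  have hne := replicate_true_ne_replicate_false hh
  rw [gluingVertex_eq hh, VsetElem, Nat.add_sub_cancel]
  split_ifs with h1 h2
  · simp only [leftPos, rightPos]
    refine ⟨Nat.mul_div_cancel _ (by omega), ?_⟩
    rw [mul_comm, Nat.mul_add_div (by omega), Nat.div_eq_of_lt (by omega), add_zero, width]
  · have hn : n = 0 := by simpa [(NN_pos h).ne'] using h2
    simp [leftPos, rightPos, hn, hne.symm]
  · simp only [leftPos, rightPos, if_true, hne, if_false, and_self, mul_assoc, pow_mul_width hf hfe]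

end

/-! ### Edges -/

/-- In each tree of level `e + 1`, a spine joins the `k`-th leaf to the `f`-th vertex of the `t`-th
of the sets `V^e` below this tree. -/
structure IsSpine (h e k t f : ℕ) : Prop where
  one_le_k : 1 ≤ k
  k_le : k ≤ 2 ^ h
  t_eq : t = 2 * k - 2 ∨ t = 2 * k + 1
  one_le_t : 1 ≤ t
  t_le : t ≤ 2 ^ (h + 1)
  one_le_f : 1 ≤ f
  f_le : f ≤ e

/-- The edges of `G_{h,d,m}` off the root, up to orientation, sorted by the level and the index of
the smallest copy that contains them. -/
inductive Edge (h d m : ℕ) : ℕ → ℕ → Raw → Raw → Prop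
  | base (k : ℕ) : Edge h d m 1 (k / (d + 1)) (.path k) (.path (k + 1))
  | child (e q : ℕ) (a : ℕ × ℕ) : 1 ≤ e → a ∈ properNodes h → parent a ∈ properNodes h →
      Edge h d m (e + 1) q (node h m (e + 1) q (parent a)) (node h m (e + 1) q a)
  | step (e q k t f s : ℕ) : IsSpine h e k t f →
      Edge h d m (e + 1) q (.spine (e + 1) (q + 1) k t f s) (.spine (e + 1) (q + 1) k t f (s + 1))
  | top (e q k t f s : ℕ) : IsSpine h e k t f →
      Edge h d m (e + 1) q (node h m (e + 1) q (0, k - 1)) (.spine (e + 1) (q + 1) k t f s)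
  | bottom (e q k t f s : ℕ) : IsSpine h e k t f →
      Edge h d m (e + 1) q (.spine (e + 1) (q + 1) k t f s) (gluingVertex h d m e (q * NN h + t) f)
  | short (e q k t f : ℕ) : IsSpine h e k t f →
      Edge h d m (e + 1) q (node h m (e + 1) q (0, k - 1))
        (gluingVertex h d m e (q * NN h + t) f)

/-- Adjacency of vertex codes. -/
def Adj (h d m : ℕ) (x y : Raw) : Prop := rel h d m x y ∨ rel h d m y x

instance (h d m : ℕ) : Std.Symm (Adj h d m) := ⟨fun _ _ => Or.symm⟩

/-- A set of vertices of `G_{h,d,m}` that does not contain the root. -/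
structure RootFree (h d m : ℕ) (R : Set Raw) : Prop where
  valid : ∀ w ∈ R, Valid h d m w
  ne_root : ∀ w ∈ R, w ≠ RootR m

section

variable {h d m c e i k n q t f : ℕ} {w x y : Raw} {R : Set Raw}

theorem IsSpine.one_le (hs : IsSpine h e k t f) : 1 ≤ e := hs.one_le_f.trans hs.f_le

theorem IsSpine.two_le_t (hs : IsSpine h e k t f) : 2 ≤ t := by
  obtain ⟨_, _, _, _, _, _, _⟩ := hs
  omega

theorem IsSpine.t_le_NN (hs : IsSpine h e k t f) : t ≤ NN h := by
  obtain ⟨_, _, _, _, ht, _, _⟩ := hs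
  have := NN_add_one h
  omega

theorem IsSpine.leaf_mem (hh : 1 ≤ h) (hs : IsSpine h e k t f) : (0, k - 1) ∈ properNodes h := by
  obtain ⟨_, _, _, _, _, _, _⟩ := hs
  exact leaf_mem_properNodes hh (by omega)

theorem IsSpine.gluingVertex_mem_column (hh : 1 ≤ h) (hs : IsSpine h e k t f) :
    gluingVertex h d m e (q * NN h + t) f ∈ column h d e ((q * NN h + (t - 1)) * width h e) := by
  have := hs.two_le_t
  rw [show q * NN h + t = q * NN h + (t - 1) + 1 by omega]
  exact Ghdm.gluingVertex_mem_column hh hs.one_le_f hs.f_le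

theorem IsSpine.of_valid {j s : ℕ} (hw : Valid h d m (.spine j i k t f s)) :
    IsSpine h (j - 1) k t f := by
  obtain ⟨_, _, _, _, h1, h2, h3, h4, h5, h6, h7, _⟩ := hw
  exact ⟨h1, h2, h3, h4, h5, h6, h7⟩

theorem exists_succ_of_valid_canon_tree {p : List Bool}
    (hw : Valid h d m (canon h m (.tree e i p))) (hroot : canon h m (.tree e i p) ≠ RootR m) :
    p ≠ [] ∧ (∃ e', 1 ≤ e' ∧ e = e' + 1) ∧ ∃ q, i = q + 1 := by
  simp only [canon] at hw hroot
  split_ifs at hw hroot with hnil hleft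
  · exact absurd rfl hroot
  · have := hw.1
    exact ⟨hnil, ⟨e - 1, by omega⟩, i - 1, by omega⟩
  · have := hw.1
    have := hw.2.2.1
    exact ⟨hnil, ⟨e - 1, by omega⟩, i - 1, by omega⟩

theorem exists_properNode_eq_natToBits {p : List Bool} (hp : p ≠ []) (hlen : p.length ≤ h) :
    ∃ a ∈ properNodes h, a.1 = h - p.length ∧ p = natToBits (h - a.1) a.2 := by
  have : 0 < p.length := List.length_pos_iff.2 hp
  obtain ⟨u, hu, heq⟩ := exists_eq_natToBits p
  have hsub : h - (h - p.length) = p.length := by omega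
  exact ⟨(h - p.length, u), ⟨show h - p.length < h by omega, by simpa only [hsub]⟩, rfl,
    by simpa only [hsub]⟩

theorem edge_child_of_append {p : List Bool} {b : Bool} (he : 1 ≤ e) (hp : p ≠ [])
    (hlen : p.length < h) : Edge h d m (e + 1) q (canon h m (.tree (e + 1) (q + 1) p))
      (canon h m (.tree (e + 1) (q + 1) (p ++ [b]))) := by
  obtain ⟨a, ha, hlev, heq⟩ :=
    exists_properNode_eq_natToBits (h := h) (p := p ++ [b]) (by simp) (by simpa)
  have : 0 < p.length := List.length_pos_iff.2 hp
  rw [List.length_append, List.length_singleton] at hlev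
  have hparent : p = natToBits (h - (parent a).1) (parent a).2 := by
    rw [show h - a.1 = h - (a.1 + 1) + 1 by omega, natToBits_succ] at heq
    exact (List.append_inj' heq rfl).1
  have hedge := Edge.child (d := d) (m := m) e q a he ha (parent_mem_properNodes ha (by omega))
  rwa [node, node, ← hparent, ← heq] at hedge

theorem exists_edge_of_rel (hx : Valid h d m x) (hy : Valid h d m y) (hxr : x ≠ RootR m)
    (hyr : y ≠ RootR m) (hxy : rel h d m x y) : ∃ e q, Edge h d m e q x y := by
  obtain ⟨a, b, hab, rfl, rfl⟩ := hxy
  have level_index_eq_succ {j i k t f s : ℕ} (hw : Valid h d m (.spine j i k t f s)) :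
      (∃ e, j = e + 1) ∧ ∃ q, i = q + 1 := by
    obtain ⟨hj, -, hi, -⟩ := hw
    exact ⟨⟨j - 1, by omega⟩, i - 1, by omega⟩
  cases hab with
  | base k => exact ⟨_, _, .base k⟩
  | child j i p b hp =>
    obtain ⟨hnil, ⟨e, he, rfl⟩, q, rfl⟩ := exists_succ_of_valid_canon_tree hx hxr
    exact ⟨_, _, edge_child_of_append he hnil hp⟩
  | step j i k t f s =>
    obtain ⟨⟨e, rfl⟩, q, rfl⟩ := level_index_eq_succ hx
    exact ⟨_, _, .step e q k t f s (.of_valid hx)⟩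
  | toLeaf j i k t f =>
    obtain ⟨⟨e, rfl⟩, q, rfl⟩ := level_index_eq_succ hy
    exact ⟨_, _, .top e q k t f 1 (.of_valid hy)⟩
  | toV j i k t f =>
    obtain ⟨⟨e, rfl⟩, q, rfl⟩ := level_index_eq_succ hx
    exact ⟨_, _, .bottom e q k t f d (.of_valid hx)⟩
  | short j i k t f _ h1 h2 h3 h4 h5 h6 h7 =>
    obtain ⟨-, ⟨e, -, rfl⟩, q, rfl⟩ := exists_succ_of_valid_canon_tree hx hxr
    exact ⟨_, _, .short e q k t f ⟨h1, h2, h3, h4, h5, h6, h7⟩⟩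

theorem RootFree.exists_edge (hR : RootFree h d m R) (hx : x ∈ R) (hy : y ∈ R)
    (hxy : Adj h d m x y) : ∃ e q, Edge h d m e q x y ∨ Edge h d m e q y x := by
  rcases hxy with hxy | hyx
  · obtain ⟨e, q, he⟩ := exists_edge_of_rel (hR.valid x hx) (hR.valid y hy) (hR.ne_root x hx)
      (hR.ne_root y hy) hxy
    exact ⟨e, q, .inl he⟩
  · obtain ⟨e, q, he⟩ := exists_edge_of_rel (hR.valid y hy) (hR.valid x hx) (hR.ne_root y hy)
      (hR.ne_root x hx) hyx
    exact ⟨e, q, .inr he⟩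

theorem Edge.one_le (hxy : Edge h d m e q x y) : 1 ≤ e := by cases hxy <;> omega

theorem Edge.level_eq (hh : 1 ≤ h) (hxy : Edge h d m e q x y) : level x = e := by
  cases hxy with
  | base => rfl
  | child _ _ _ _ _ ha => exact level_node ha
  | step => rfl
  | top _ _ _ _ _ _ hs => exact level_node (hs.leaf_mem hh)
  | bottom => rfl
  | short _ _ _ _ _ hs => exact level_node (hs.leaf_mem hh)

/-- The vertices whose position lies strictly inside the `q`-th copy of `G_{h,d,e}`. -/
def interior (h d e q : ℕ) : Set Raw :=
  {w | q * width h e < rightPos h d w ∧ leftPos h d w < (q + 1) * width h e}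

theorem spine_mem_interior {s : ℕ} : Raw.spine e (q + 1) k t f s ∈ interior h d e q := by
  have : q * width h e < (q + 1) * width h e :=
    Nat.mul_lt_mul_of_pos_right (by omega) (width_pos h e)
  exact ⟨this, this⟩

theorem IsSpine.gluingVertex_pos (hs : IsSpine h e k t f) :
    q * width h (e + 1) < (q * NN h + (t - 1)) * width h e ∧
      (q * NN h + (t - 1)) * width h e < (q + 1) * width h (e + 1) := by
  have := hs.two_le_t
  have := hs.t_le_NN
  rw [width_succ hs.one_le, ← mul_assoc, ← mul_assoc, add_mul q]
  exact ⟨Nat.mul_lt_mul_of_pos_right (by omega) (width_pos h e),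
    Nat.mul_lt_mul_of_pos_right (by omega) (width_pos h e)⟩

theorem IsSpine.gluingVertex_mem_interior (hh : 1 ≤ h) (hs : IsSpine h e k t f) :
    gluingVertex h d m e (q * NN h + t) f ∈ interior h d (e + 1) q := by
  obtain ⟨-, hleft, hright⟩ := hs.gluingVertex_mem_column (d := d) (m := m) (q := q) hh
  have := hs.gluingVertex_pos (q := q)
  exact ⟨by omega, by omega⟩

theorem IsSpine.gluingVertex_mem_copy (hh : 1 ≤ h) (hs : IsSpine h e k t f) :
    gluingVertex h d m e (q * NN h + t) f ∈ copy h d (e + 1) q := by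
  obtain ⟨hlevel, hleft, hright⟩ := hs.gluingVertex_mem_column (d := d) (m := m) (q := q) hh
  have := hs.gluingVertex_pos (q := q)
  exact ⟨by omega, by omega, by omega⟩

theorem Edge.mem_copy (hh : 1 ≤ h) (hxy : Edge h d m e q x y) :
    x ∈ copy h d e q ∧ y ∈ copy h d e q := by
  cases hxy with
  | base k =>
    have hright : (k + 1 + d) / (d + 1) = k / (d + 1) + 1 := by
      rw [show k + 1 + d = k + (d + 1) by ring, Nat.add_div_right _ (by omega)]
    have hleft : k / (d + 1) ≤ (k + 1) / (d + 1) := Nat.div_le_div_right (by omega)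
    have hmid : (k + d) / (d + 1) ≤ (k + 1 + d) / (d + 1) := Nat.div_le_div_right (by omega)
    simp only [copy, Set.mem_ofPred_eq, level, leftPos, rightPos, width, le_refl, Nat.sub_self,
      pow_zero, mul_one, true_and]
    omega
  | child _ _ _ _ ha ha' => exact ⟨node_mem_copy ha', node_mem_copy ha⟩
  | step => exact ⟨spine_mem_copy, spine_mem_copy⟩
  | top _ _ _ _ _ _ hs => exact ⟨node_mem_copy (hs.leaf_mem hh), spine_mem_copy⟩
  | bottom _ _ _ _ _ _ hs => exact ⟨spine_mem_copy, hs.gluingVertex_mem_copy hh⟩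
  | short _ _ _ _ _ hs => exact ⟨node_mem_copy (hs.leaf_mem hh), hs.gluingVertex_mem_copy hh⟩

theorem Edge.mem_interior (hh : 1 ≤ h) (he : 1 ≤ e) (hxy : Edge h d m (e + 1) q x y) :
    x ∈ interior h d (e + 1) q ∨ y ∈ interior h d (e + 1) q := by
  cases hxy with
  | base => omega
  | child _ _ a _ _ ha =>
    have : q * width h (e + 1) < (q + 1) * width h (e + 1) :=
      Nat.mul_lt_mul_of_pos_right (by omega) (width_pos h _)
    refine .inl ⟨?_, ?_⟩
    · rwa [rightPos_node ha, if_neg (by simp [parent])]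
    · rwa [leftPos_node ha, if_neg (by simp [parent])]
  | step => exact .inl spine_mem_interior
  | top => exact .inr spine_mem_interior
  | bottom => exact .inl spine_mem_interior
  | short _ _ _ _ _ hs => exact .inr (hs.gluingVertex_mem_interior hh)

theorem eq_of_mem_interior_of_mem_copy (hw : w ∈ interior h d e q) (hw' : w ∈ copy h d e i) :
    q = i := by
  have h1 := Nat.lt_of_mul_lt_mul_right (hw.1.trans_le hw'.2.2)
  have h2 := Nat.lt_of_mul_lt_mul_right (hw'.2.1.trans_lt hw.2)
  omega

theorem exists_subcopy (hh : 1 ≤ h) (hc : 1 ≤ c) {j : ℕ}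
    (hx : x ∈ copy h d (c + 1) i) (hy : y ∈ copy h d (c + 1) i) (hxj : x ∈ copy h d c j)
    (hyj : y ∈ copy h d c j) :
    ∃ t < NN h, x ∈ copy h d c (i * NN h + t) ∧ y ∈ copy h d c (i * NN h + t) := by
  have hxx := leftPos_le_rightPos (d := d) hh x
  have hyy := leftPos_le_rightPos (d := d) hh y
  have hN := NN_pos h
  simp only [copy, Set.mem_ofPred_eq, width_succ hc, ← mul_assoc] at hx hy hxj hyj ⊢
  have last : i * NN h + (NN h - 1) + 1 = (i + 1) * NN h := by rw [add_mul]; omega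
  rcases lt_or_ge j (i * NN h) with hj | hj
  · have := Nat.mul_le_mul_right (width h c) hj
    have := Nat.mul_le_mul_right (width h c) (Nat.le_succ (i * NN h))
    exact ⟨0, hN, by simp only [add_zero, Nat.succ_eq_add_one] at *; omega⟩
  rcases lt_or_ge j ((i + 1) * NN h) with hj' | hj'
  · rw [add_mul] at hj'
    exact ⟨j - i * NN h, by omega, by simp only [Nat.add_sub_cancel' hj]; omega⟩
  · have := Nat.mul_le_mul_right (width h c) hj'
    have := Nat.mul_le_mul_right (width h c) (Nat.le_succ (i * NN h + (NN h - 1)))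
    exact ⟨NN h - 1, by omega, by simp only [last, Nat.succ_eq_add_one] at *; omega⟩

theorem Edge.exists_subcopy_or (hh : 1 ≤ h) (hc : 1 ≤ c) (hxy : Edge h d m e q x y)
    (hx : x ∈ copy h d (c + 1) i) (hy : y ∈ copy h d (c + 1) i) :
    (∃ t < NN h, x ∈ copy h d c (i * NN h + t) ∧ y ∈ copy h d c (i * NN h + t)) ∨
      Edge h d m (c + 1) i x y := by
  obtain ⟨hxq, hyq⟩ := hxy.mem_copy hh
  have hlevel := hxy.level_eq hh
  rcases (show e ≤ c ∨ e = c + 1 by have := hx.1; omega) with hec | rfl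
  · exact .inl (exists_subcopy hh hc hx hy (copy_subset_copy hxy.one_le hec hxq)
      (copy_subset_copy hxy.one_le hec hyq))
  · obtain rfl : q = i := (hxy.mem_interior hh hc).elim
      (eq_of_mem_interior_of_mem_copy · hx) (eq_of_mem_interior_of_mem_copy · hy)
    exact .inr hxy

theorem eq_node_of_mem_copy (hh : 1 ≤ h) {j : ℕ} {p : List Bool} (hw : Valid h d m (.tree c j p))
    (hroot : .tree c j p ≠ RootR m) (hmem : .tree c j p ∈ copy h d c i) :
    ∃ a ∈ properNodes h, .tree c j p = node h m c i a := by
  obtain ⟨-, hleft, hright⟩ := hmem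
  obtain ⟨-, -, hj, -, hlen, hnil, hfirst⟩ := hw
  have hp : p ≠ [] := by
    intro hp
    obtain ⟨rfl, rfl⟩ := hnil hp
    exact hroot (by rw [hp, RootR])
  obtain ⟨a, ha, -, rfl⟩ := exists_properNode_eq_natToBits hp hlen
  have hpos := width_pos h c
  simp only [leftPos, rightPos, natToBits_eq_replicate_true_iff ha,
    natToBits_eq_replicate_false_iff ha] at hleft hright hfirst
  by_cases hji : j = i + 1
  · refine ⟨a, ha, ?_⟩
    rw [node_eq ha, if_neg fun h0 => ?_, hji]
    have := hfirst h0.1 hp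
    omega
  · split_ifs at hleft hright with h1 h2 h2 <;>
      have h3 := Nat.le_of_mul_le_mul_right hleft hpos <;>
      have h4 := Nat.le_of_mul_le_mul_right hright hpos
    · have hpow : 2 ^ 1 ≤ 2 ^ h := Nat.pow_le_pow_right (by omega) hh
      have : 2 ^ h - 1 = 0 := congrArg Prod.snd (h1.symm.trans h2)
      omega
    · obtain rfl : j = i := by omega
      have h0 := leaf_mem_properNodes (u := 0) hh (by positivity)
      refine ⟨(0, 0), h0, ?_⟩
      rw [node_eq h0, if_pos ⟨rfl, by omega⟩, (natToBits_eq_replicate_true_iff ha).2 h1]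
    · have := hfirst h2 hp
      omega
    · omega

theorem RootFree.eq_node_or_eq_spine (hh : 1 ≤ h) (hc : 1 ≤ c) (hR : RootFree h d m R)
    (hw : w ∈ R) (hmem : w ∈ copy h d (c + 1) i) (hlevel : level w = c + 1) :
    (∃ a ∈ properNodes h, w = node h m (c + 1) i a) ∨
      ∃ k t f s, IsSpine h c k t f ∧ w = .spine (c + 1) (i + 1) k t f s := by
  have hvalid := hR.valid w hw
  cases w with
  | path k => simp only [level] at hlevel; omega
  | tree e j p =>
    obtain rfl : e = c + 1 := hlevel
    exact .inl (eq_node_of_mem_copy hh hvalid (hR.ne_root _ hw) hmem)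
  | spine e j k t f s =>
    obtain rfl : e = c + 1 := hlevel
    obtain ⟨-, hleft, hright⟩ := hmem
    have h1 := Nat.le_of_mul_le_mul_right hleft (width_pos h (c + 1))
    have h2 := Nat.le_of_mul_le_mul_right hright (width_pos h (c + 1))
    obtain rfl : j = i + 1 := by have := hvalid.2.2.1; omega
    exact .inr ⟨k, t, f, s, .of_valid hvalid, rfl⟩

end

/-! ### Crossings of copies and their traces on trees -/

/-- The set `R` contains a walk through the `i`-th copy of `G_{h,d,c}` from its left end to its
right end. -/
def Crosses (h d m c i : ℕ) (R : Set Raw) : Prop :=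
  ∃ u ∈ column h d c (i * width h c), ∃ v ∈ column h d c ((i + 1) * width h c),
    Joined (Adj h d m) (R ∩ copy h d c i) u v

/-- The nodes of the `i`-th tree of level `c` whose vertices lie in `R`. -/
def trace (h m c i : ℕ) (R : Set Raw) : Set (ℕ × ℕ) := {a ∈ properNodes h | node h m c i a ∈ R}

/-- A marking of the ends `0, …, N` of the `N` copies of `G_{h,d,c}` in a copy of `G_{h,d,c+1}` and
of the nodes in `T` of its tree that respects the crossed copies, the tree edges and the spines. It
extends to all vertices that a connected set with these crossings and the trace `T` can reach. -/
structure IsMarking (h : ℕ) (T : Set (ℕ × ℕ)) (C col : ℕ → Prop) (tcol : ℕ × ℕ → Prop) :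
    Prop where
  crossed : ∀ t < NN h, C t → (col t ↔ col (t + 1))
  treeAdj : ∀ a ∈ T, ∀ b ∈ T, TreeAdj a b → (tcol a ↔ tcol b)
  spine : ∀ {e k t f}, IsSpine h e k t f → (0, k - 1) ∈ T → (tcol (0, k - 1) ↔ col (t - 1))

/-- The extension of a marking to vertices: a vertex in a copy of `G_{h,d,c}` is marked if it can be
reached within this copy from a marked end, and a spine if its lower end is marked. -/
def Marked (h d m c i : ℕ) (R : Set Raw) (col : ℕ → Prop) (tcol : ℕ × ℕ → Prop) (w : Raw) : Prop :=
  (∃ t < NN h, ∃ n, (n = t ∨ n = t + 1) ∧ col n ∧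
    ∃ u ∈ column h d c ((i * NN h + n) * width h c),
      Joined (Adj h d m) (R ∩ copy h d c (i * NN h + t)) u w) ∨
  (∃ a ∈ trace h m (c + 1) i R, tcol a ∧ w = node h m (c + 1) i a) ∨
  ∃ k t f s, col (t - 1) ∧ w = .spine (c + 1) (i + 1) k t f s

section

variable {h d m c i k n t f s : ℕ} {R : Set Raw} {x y w : Raw} {a : ℕ × ℕ} {col : ℕ → Prop}
  {tcol : ℕ × ℕ → Prop}

theorem marked_spine_iff :
    Marked h d m c i R col tcol (.spine (c + 1) (i + 1) k t f s) ↔ col (t - 1) := by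
  refine ⟨?_, fun ht => .inr (.inr ⟨k, t, f, s, ht, rfl⟩)⟩
  rintro (⟨_, _, _, _, _, _, _, hjoin⟩ | ⟨a, -, -, ha⟩ | ⟨_, _, _, _, ht, heq⟩)
  · exact absurd hjoin.right_mem.2.1 (by simp [level])
  · exact absurd ha.symm node_ne_spine
  · cases heq
    exact ht

theorem marked_node_iff (ha : a ∈ trace h m (c + 1) i R) :
    Marked h d m c i R col tcol (node h m (c + 1) i a) ↔ tcol a := by
  refine ⟨?_, fun hta => .inr (.inl ⟨a, ha, hta, rfl⟩)⟩
  rintro (⟨_, _, _, _, _, _, _, hjoin⟩ | ⟨b, hb, htb, heq⟩ | ⟨_, _, _, _, _, heq⟩)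
  · exact absurd hjoin.right_mem.2.1 (by simp [level_node ha.1])
  · rwa [node_injOn ha.1 hb.1 heq]
  · exact absurd heq node_ne_spine

theorem marked_column_iff
    (hC : ∀ t < NN h, Crosses h d m c (i * NN h + t) R → (col t ↔ col (t + 1)))
    (hn : n ≤ NN h) (hw : w ∈ R) (hwn : w ∈ column h d c ((i * NN h + n) * width h c)) :
    Marked h d m c i R col tcol w ↔ col n := by
  have hN := NN_pos h
  constructor
  · rintro (⟨t, ht, n', hn', hcol, u, hu, hjoin⟩ | ⟨a, ha, -, rfl⟩ | ⟨_, _, _, _, _, rfl⟩)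
    · have hnt := (mem_copy_iff_of_mem_column hwn).1 hjoin.right_mem.2
      obtain rfl | hne := eq_or_ne n n'
      · exact hcol
      rcases hn' with rfl | rfl
      · obtain rfl : n = n' + 1 := by omega
        exact (hC n' ht ⟨u, hu, w, hwn, hjoin⟩).1 hcol
      · obtain rfl : n = t := by omega
        exact (hC n ht ⟨w, hwn, u, hu, hjoin.symm⟩).2 hcol
    · exact absurd hwn.1 (by simp [level_node ha.1])
    · exact absurd hwn.1 (by simp [level])
  · intro hcol
    obtain ⟨t, ht, hnt⟩ : ∃ t < NN h, n = t ∨ n = t + 1 := by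
      rcases hn.lt_or_eq with hlt | rfl
      · exact ⟨n, hlt, .inl rfl⟩
      · exact ⟨NN h - 1, by omega, by omega⟩
    exact .inl ⟨t, ht, n, hnt, hcol, w, hwn,
      .refl ⟨hw, (mem_copy_iff_of_mem_column hwn).2 (by omega)⟩⟩

theorem Marked.of_subcopy (hh : 1 ≤ h)
    (hC : ∀ t < NN h, Crosses h d m c (i * NN h + t) R → (col t ↔ col (t + 1)))
    (hx : x ∈ R) (hy : y ∈ R) (hxy : Adj h d m x y) (ht : t < NN h)
    (hxt : x ∈ copy h d c (i * NN h + t)) (hyt : y ∈ copy h d c (i * NN h + t))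
    (hmark : Marked h d m c i R col tcol x) : Marked h d m c i R col tcol y := by
  have of_column (n : ℕ) (hn : n = t ∨ n = t + 1)
      (hxn : x ∈ column h d c ((i * NN h + n) * width h c)) : Marked h d m c i R col tcol y :=
    .inl ⟨t, ht, n, hn, (marked_column_iff hC (by omega) hx hxn).1 hmark, x, hxn,
      Joined.of_adj ⟨hx, hxt⟩ ⟨hy, hyt⟩ hxy⟩
  rcases hmark with ⟨t', ht', n, hn, hcol, u, hu, hjoin⟩ | ⟨a, ha, -, rfl⟩ | ⟨_, _, _, _, _, rfl⟩
  · rcases lt_trichotomy t t' with hlt | rfl | hlt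
    · obtain ⟨heq, hxn⟩ :=
        mem_column_of_copy_of_copy hh (Nat.add_lt_add_left hlt _) hxt hjoin.right_mem.2
      exact of_column t' (by omega) hxn
    · exact .inl ⟨t, ht, n, hn, hcol, u, hu, hjoin.tail ⟨hy, hyt⟩ hxy⟩
    · obtain ⟨-, hxn⟩ :=
        mem_column_of_copy_of_copy hh (Nat.add_lt_add_left hlt _) hjoin.right_mem.2 hxt
      exact of_column t (by omega) hxn
  · exact absurd hxt.1 (by simp [level_node ha.1])
  · exact absurd hxt.1 (by simp [level])

theorem IsMarking.marked_iff_of_edge (hh : 1 ≤ h) (hc : 1 ≤ c)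
    (hM : IsMarking h (trace h m (c + 1) i R) (fun t => Crosses h d m c (i * NN h + t) R) col tcol)
    (hx : x ∈ R) (hy : y ∈ R) (hxy : Edge h d m (c + 1) i x y) :
    Marked h d m c i R col tcol x ↔ Marked h d m c i R col tcol y := by
  have marked_gluingVertex {k t f : ℕ} (hs : IsSpine h c k t f)
      (hg : gluingVertex h d m c (i * NN h + t) f ∈ R) :
      Marked h d m c i R col tcol (gluingVertex h d m c (i * NN h + t) f) ↔ col (t - 1) :=
    marked_column_iff hM.crossed (by have := hs.t_le_NN; omega) hg (hs.gluingVertex_mem_column hh)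
  cases hxy with
  | base => omega
  | child _ _ a _ ha ha' =>
    rw [marked_node_iff ⟨ha', hx⟩, marked_node_iff ⟨ha, hy⟩]
    exact hM.treeAdj _ ⟨ha', hx⟩ _ ⟨ha, hy⟩ (.inr rfl)
  | step => rw [marked_spine_iff, marked_spine_iff]
  | top _ _ _ _ _ _ hs =>
    rw [marked_node_iff ⟨hs.leaf_mem hh, hx⟩, marked_spine_iff]
    exact hM.spine hs ⟨hs.leaf_mem hh, hx⟩
  | bottom _ _ _ _ _ _ hs => rw [marked_spine_iff, marked_gluingVertex hs hy]
  | short _ _ _ _ _ hs =>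
    rw [marked_node_iff ⟨hs.leaf_mem hh, hx⟩, marked_gluingVertex hs hy]
    exact hM.spine hs ⟨hs.leaf_mem hh, hx⟩

theorem IsMarking.marked_of_adj (hh : 1 ≤ h) (hc : 1 ≤ c) (hR : RootFree h d m R)
    (hM : IsMarking h (trace h m (c + 1) i R) (fun t => Crosses h d m c (i * NN h + t) R) col tcol)
    (hx : x ∈ R ∩ copy h d (c + 1) i) (hy : y ∈ R ∩ copy h d (c + 1) i) (hxy : Adj h d m x y)
    (hmark : Marked h d m c i R col tcol x) : Marked h d m c i R col tcol y := by
  obtain ⟨e, q, hedge | hedge⟩ := hR.exists_edge hx.1 hy.1 hxy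
  · rcases hedge.exists_subcopy_or hh hc hx.2 hy.2 with ⟨t, ht, hxt, hyt⟩ | hedge
    · exact hmark.of_subcopy hh hM.crossed hx.1 hy.1 hxy ht hxt hyt
    · exact (hM.marked_iff_of_edge hh hc hx.1 hy.1 hedge).1 hmark
  · rcases hedge.exists_subcopy_or hh hc hy.2 hx.2 with ⟨t, ht, hyt, hxt⟩ | hedge
    · exact hmark.of_subcopy hh hM.crossed hx.1 hy.1 hxy ht hxt hyt
    · exact (hM.marked_iff_of_edge hh hc hy.1 hx.1 hedge).2 hmark

theorem RootFree.mem_column_or_eq_leftmost (hh : 1 ≤ h) (hc : 1 ≤ c) (hR : RootFree h d m R)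
    (hw : w ∈ R) (hwi : w ∈ column h d (c + 1) (i * width h (c + 1))) :
    w ∈ column h d c ((i * NN h + 0) * width h c) ∨ w = node h m (c + 1) i (0, 0) := by
  have hcopy : w ∈ copy h d (c + 1) i := (mem_copy_iff_of_mem_column hwi).2 (.inl rfl)
  have hlt : i * width h (c + 1) < (i + 1) * width h (c + 1) :=
    Nat.mul_lt_mul_of_pos_right (by omega) (width_pos h _)
  obtain ⟨hlevel, hleft, hright⟩ := hwi
  rcases Nat.le_or_eq_of_le_succ hlevel with hlevel | hlevel
  · rw [width_succ hc, ← mul_assoc] at hleft hright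
    exact .inl ⟨hlevel, hleft, hright⟩
  · right
    obtain ⟨a, ha, rfl⟩ | ⟨_, _, _, _, -, rfl⟩ := hR.eq_node_or_eq_spine hh hc hw hcopy hlevel
    · rw [rightPos_node ha] at hright
      split_ifs at hright with h0
      · rw [h0]
      · omega
    · exact absurd hright hlt.ne'

theorem RootFree.mem_column_or_eq_rightmost (hh : 1 ≤ h) (hc : 1 ≤ c) (hR : RootFree h d m R)
    (hw : w ∈ R) (hwi : w ∈ column h d (c + 1) ((i + 1) * width h (c + 1))) :
    w ∈ column h d c ((i * NN h + NN h) * width h c) ∨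
      w = node h m (c + 1) i (0, 2 ^ h - 1) := by
  have hcopy : w ∈ copy h d (c + 1) i := (mem_copy_iff_of_mem_column hwi).2 (.inr rfl)
  have hlt : i * width h (c + 1) < (i + 1) * width h (c + 1) :=
    Nat.mul_lt_mul_of_pos_right (by omega) (width_pos h _)
  obtain ⟨hlevel, hleft, hright⟩ := hwi
  rcases Nat.le_or_eq_of_le_succ hlevel with hlevel | hlevel
  · rw [width_succ hc, ← mul_assoc, add_one_mul] at hleft hright
    exact .inl ⟨hlevel, hleft, hright⟩
  · right
    obtain ⟨a, ha, rfl⟩ | ⟨_, _, _, _, -, rfl⟩ := hR.eq_node_or_eq_spine hh hc hw hcopy hlevel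
    · rw [leftPos_node ha] at hleft
      split_ifs at hleft with h0
      · rw [h0]
      · omega
    · exact absurd hleft hlt.ne

theorem IsMarking.right_end (hh : 1 ≤ h) (hc : 1 ≤ c) (hR : RootFree h d m R)
    (hM : IsMarking h (trace h m (c + 1) i R) (fun t => Crosses h d m c (i * NN h + t) R) col tcol)
    (hcross : Crosses h d m (c + 1) i R) (hcol : col 0)
    (htcol : (0, 0) ∈ trace h m (c + 1) i R → tcol (0, 0)) :
    col (NN h) ∨ (0, 2 ^ h - 1) ∈ trace h m (c + 1) i R ∧ tcol (0, 2 ^ h - 1) := by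
  obtain ⟨u, hu, v, hv, huv⟩ := hcross
  have hmu : Marked h d m c i R col tcol u := by
    obtain hu | rfl := hR.mem_column_or_eq_leftmost hh hc huv.left_mem.1 hu
    · exact (marked_column_iff hM.crossed (Nat.zero_le _) huv.left_mem.1 hu).2 hcol
    · have h0 : (0, 0) ∈ trace h m (c + 1) i R :=
        ⟨leaf_mem_properNodes hh (by positivity), huv.left_mem.1⟩
      exact (marked_node_iff h0).2 (htcol h0)
  have hmv : Marked h d m c i R col tcol v :=
    huv.preserves (fun _ hx _ hy hxy => hM.marked_of_adj hh hc hR hx hy hxy) hmu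
  obtain hv | rfl := hR.mem_column_or_eq_rightmost hh hc huv.right_mem.1 hv
  · exact .inl ((marked_column_iff hM.crossed le_rfl huv.right_mem.1 hv).1 hmv)
  · have h1 : (0, 2 ^ h - 1) ∈ trace h m (c + 1) i R :=
      ⟨leaf_mem_properNodes hh (by simp), huv.right_mem.1⟩
    exact .inr ⟨h1, (marked_node_iff h1).1 hmv⟩

end

section

variable {h d m c i : ℕ} {R : Set Raw}

theorem Crosses.exists_joined_leaves {θ : ℕ} {col : ℕ → Prop} (hh : 1 ≤ h) (hc : 1 ≤ c)
    (hR : RootFree h d m R) (hcross : Crosses h d m (c + 1) i R)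
    (hcrossed : ∀ t < NN h, Crosses h d m c (i * NN h + t) R → (col t ↔ col (t + 1)))
    (hcol_left : col 0) (hcol_right : ¬ col (NN h))
    (hspine : ∀ {e k t f}, IsSpine h e k t f → (0, k - 1) ∈ trace h m (c + 1) i R →
      (k - 1 < θ ↔ col (t - 1)))
    (hleft : (0, 0) ∈ trace h m (c + 1) i R → 0 < θ)
    (hright : (0, 2 ^ h - 1) ∈ trace h m (c + 1) i R → θ ≤ 2 ^ h - 1) :
    ∃ u v, Joined TreeAdj (trace h m (c + 1) i R) (0, u) (0, v) ∧ u < θ ∧ θ ≤ v := by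
  by_contra! hno
  set T := trace h m (c + 1) i R
  let tcol (a : ℕ × ℕ) : Prop := ∃ u < θ, Joined TreeAdj T (0, u) a
  have tcol_leaf {v : ℕ} (hv : (0, v) ∈ T) : tcol (0, v) ↔ v < θ :=
    ⟨fun ⟨u, hu, huv⟩ => hno u v huv hu, fun hlt => ⟨v, hlt, .refl hv⟩⟩
  have hM : IsMarking h T (fun t => Crosses h d m c (i * NN h + t) R) col tcol :=
    { crossed := hcrossed
      treeAdj := fun a ha b hb hab => ⟨fun ⟨u, hu, hua⟩ => ⟨u, hu, hua.tail hb hab⟩,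
        fun ⟨u, hu, hub⟩ => ⟨u, hu, hub.tail ha (Or.symm hab)⟩⟩
      spine := fun hs hk => (tcol_leaf hk).trans (hspine hs hk) }
  rcases hM.right_end hh hc hR hcross hcol_left fun h0 => (tcol_leaf h0).2 (hleft h0) with
    hcol | ⟨hlast, htcol⟩
  · exact hcol_right hcol
  · exact ((tcol_leaf hlast).1 htcol).not_ge (hright hlast)

theorem Crosses.bypass {t : ℕ} (hh : 1 ≤ h) (hc : 1 ≤ c) (hR : RootFree h d m R)
    (hcross : Crosses h d m (c + 1) i R) (ht : t < NN h)
    (hCt : ¬ Crosses h d m c (i * NN h + t) R) :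
    ∃ u v, Joined TreeAdj (trace h m (c + 1) i R) (0, u) (0, v) ∧ 2 * u ≤ t + 1 ∧
      t ≤ 2 * v + 1 := by
  by_cases hleaf : ∃ u, (0, u) ∈ trace h m (c + 1) i R ∧ 2 * u ≤ t + 1 ∧ t ≤ 2 * u + 1
  · obtain ⟨u, hu, h1, h2⟩ := hleaf
    exact ⟨u, u, .refl hu, h1, h2⟩
  push Not at hleaf
  have hN := NN_add_one h
  obtain ⟨u, v, huv, hu, hv⟩ := hcross.exists_joined_leaves (θ := (t + 1) / 2) (col := (· ≤ t))
    hh hc hR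
    (fun n _ hCn => by
      have : n ≠ t := by rintro rfl; exact hCt hCn
      omega)
    (by omega) (by omega)
    (fun {e k n f} hs hk => by
      have := hleaf _ hk
      have := hs.one_le_k
      have := hs.t_eq
      omega)
    (fun h0 => by have := hleaf _ h0; omega)
    (fun h1 => by have := hleaf _ h1; omega)
  exact ⟨u, v, huv, by omega, by omega⟩

theorem Crosses.bypass_three {k : ℕ} (hh : 1 ≤ h) (hc : 1 ≤ c) (hR : RootFree h d m R)
    (hcross : Crosses h d m (c + 1) i R) (hk : k + 1 < 2 ^ h)
    (hC₀ : ¬ Crosses h d m c (i * NN h + 2 * k) R)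
    (hC₁ : ¬ Crosses h d m c (i * NN h + (2 * k + 1)) R)
    (hC₂ : ¬ Crosses h d m c (i * NN h + (2 * k + 2)) R) :
    ∃ u v, Joined TreeAdj (trace h m (c + 1) i R) (0, u) (0, v) ∧ u ≤ k ∧ k + 1 ≤ v := by
  have hN := NN_add_one h
  -- The leaves weakly left of `k` are attached to the ends `2 * k + 2` and `≤ 2 * k`, the other
  -- leaves to `2 * k + 1` and `≥ 2 * k + 3`.
  obtain ⟨u, v, huv, hu, hv⟩ := hcross.exists_joined_leaves (θ := k + 1)
    (col := fun n => n ≤ 2 * k ∨ n = 2 * k + 2) hh hc hR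
    (fun n _ hCn => by
      have : n ≠ 2 * k := by rintro rfl; exact hC₀ hCn
      have : n ≠ 2 * k + 1 := by rintro rfl; exact hC₁ hCn
      have : n ≠ 2 * k + 2 := by rintro rfl; exact hC₂ hCn
      omega)
    (by omega) (by omega)
    (fun {e l n f} hs _ => by
      have := hs.one_le_k
      have := hs.t_eq
      have := hs.one_le_t
      omega)
    (fun _ => by omega) (fun _ => by omega)
  exact ⟨u, v, huv, by omega, hv⟩

theorem Crosses.crossingTrace (hh : 1 ≤ h) (hc : 1 ≤ c) (hR : RootFree h d m R)
    (hcross : Crosses h d m (c + 1) i R) :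
    CrossingTrace h (trace h m (c + 1) i R) (fun t => Crosses h d m c (i * NN h + t) R) where
  subset_properNodes _ ha := ha.1
  bypass _ ht hCt := hcross.bypass hh hc hR ht hCt
  bypass_three _ hk h₀ h₁ h₂ := hcross.bypass_three hh hc hR hk h₀ h₁ h₂

end

/-! ### Distant sets cannot cross the same copy -/

/-- Two sets of vertices of `G_{h,d,m}` at distance at least three. -/
structure Apart (h d m : ℕ) (P Q : Set Raw) : Prop where
  ne : ∀ x ∈ P, ∀ y ∈ Q, x ≠ y
  not_adj : ∀ x ∈ P, ∀ y ∈ Q, ¬ Adj h d m x y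
  not_adj_adj : ∀ x ∈ P, ∀ y ∈ Q, ∀ z, Valid h d m z → Adj h d m x z → ¬ Adj h d m z y

section

variable {h d m c e i q : ℕ} {P Q : Set Raw} {a b : ℕ × ℕ} {w : Raw}

theorem rel_node_parent (ha : a.1 < h) :
    rel h d m (node h m e q (parent a)) (node h m e q a) := by
  refine ⟨_, _, rawAdj.child e (q + 1) (natToBits (h - (a.1 + 1)) (a.2 / 2)) (a.2.testBit 0) ?_,
    rfl, ?_⟩
  · rw [length_natToBits]
    omega
  · rw [← natToBits_succ, show h - (a.1 + 1) + 1 = h - a.1 by omega, node]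

theorem adj_node_of_treeAdj (ha : a ∈ properNodes h) (hb : b ∈ properNodes h) (hab : TreeAdj a b) :
    Adj h d m (node h m e q a) (node h m e q b) := by
  rcases hab with rfl | rfl
  · exact .inr (rel_node_parent ha.1)
  · exact .inl (rel_node_parent hb.1)

theorem valid_node_parent (ha : a ∈ properNodes h) (hodd : a.2 % 2 = 1)
    (hvalid : Valid h d m (node h m e q a)) : Valid h d m (node h m e q (parent a)) := by
  rw [node_eq ha, if_neg (by rintro ⟨rfl, -⟩; simp at hodd)] at hvalid
  obtain ⟨he, hem, hq, hqm, -⟩ := hvalid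
  rcases (Nat.succ_le_of_lt ha.1).lt_or_eq with hlt | heq
  · have hp := parent_mem_properNodes ha hlt
    have hne : parent a ≠ (0, 0) := by simp [parent]
    rw [node_eq hp, if_neg fun h0 => hne h0.1]
    refine ⟨he, hem, hq, hqm, ?_, fun hnil => absurd hnil (natToBits_ne_nil hp),
      fun hrep => absurd ((natToBits_eq_replicate_false_iff hp).1 hrep) hne⟩
    rw [length_natToBits]
    omega
  · have hroot : node h m e q (parent a) = .tree m 1 [] := by
      simp [node, parent, natToBits, canon, ← heq]
    rw [hroot]
    exact ⟨he.trans hem, le_rfl, le_rfl, by simp, by simp, by simp, by simp⟩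

theorem Apart.treeApart (hP : RootFree h d m P) (hQ : RootFree h d m Q) (hPQ : Apart h d m P Q) :
    TreeApart (trace h m c i P) (trace h m c i Q) where
  parent_ne a ha b hb hab := by
    have hva := valid_node_parent ha.1 (hvalid := hP.valid _ ha.2)
    have hvb := valid_node_parent hb.1 (hvalid := hQ.valid _ hb.2)
    have hmid : ¬ Valid h d m (node h m c i (parent a)) := fun hv =>
      hPQ.not_adj_adj _ ha.2 _ hb.2 _ hv (.inr (rel_node_parent ha.1.1))
        (.inl (hab ▸ rel_node_parent hb.1.1))
    rw [← hab] at hvb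
    have : a.2 % 2 ≠ 1 := fun hodd => hmid (hva hodd)
    have : b.2 % 2 ≠ 1 := fun hodd => hmid (hvb hodd)
    obtain ⟨h1, h2⟩ := Prod.mk.inj hab
    exact hPQ.ne _ ha.2 _ hb.2 (congrArg _ (Prod.ext (by omega) (by omega)))
  not_adj a ha b hb hab := hPQ.not_adj _ ha.2 _ hb.2 (adj_node_of_treeAdj ha.1 hb.1 hab)

theorem eq_path_of_mem_column_one (hw : Valid h d m w)
    (hcol : w ∈ column h d 1 (i * width h 1)) : w = .path (i * (d + 1)) := by
  obtain ⟨hlevel, hleft, hright⟩ := hcol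
  have hwidth : i * width h 1 = i := by simp [width]
  rw [hwidth] at hleft hright
  cases w with
  | path k =>
    simp only [leftPos, rightPos] at hleft hright
    rw [Nat.div_eq_iff (by omega)] at hleft hright
    congr 1
    omega
  | tree => exact absurd hw.1 (by simp only [level] at hlevel; omega)
  | spine => exact absurd hw.1 (by simp only [level] at hlevel; omega)

theorem Apart.not_crosses_both (hh : 1 ≤ h) (hP : RootFree h d m P) (hQ : RootFree h d m Q)
    (hPQ : Apart h d m P Q) (hc : 1 ≤ c) :
    ∀ i, ¬ (Crosses h d m c i P ∧ Crosses h d m c i Q) := by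
  induction c, hc using Nat.le_induction with
  | base =>
    rintro i ⟨⟨u, hu, _, -, huP⟩, v, hv, _, -, hvQ⟩
    refine hPQ.ne u huP.left_mem.1 v hvQ.left_mem.1 ?_
    rw [eq_path_of_mem_column_one (hP.valid u huP.left_mem.1) hu,
      eq_path_of_mem_column_one (hQ.valid v hvQ.left_mem.1) hv]
  | succ c hc ih =>
    rintro i ⟨hPi, hQi⟩
    exact (hPQ.treeApart hP hQ).false_of_crossingTrace hh (hPi.crossingTrace hh hc hP)
      (hQi.crossingTrace hh hc hQ) fun t _ => ih (i * NN h + t)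

end

/-! ### Leaving a column upwards -/

/-- The vertex `w` is a leaf from which spines lead to the vertices at the position `x`. It is
unique, see `IsGuard.unique`. -/
def IsGuard (h m x : ℕ) (w : Raw) : Prop :=
  ∃ e q k t f, IsSpine h e k t f ∧ (q * NN h + (t - 1)) * width h e = x ∧
    w = node h m (e + 1) q (0, k - 1)

/-- The vertex `w` lies on a spine that leads to a vertex of level at most `c` at the
position `x`. -/
def IsAbove (h c x : ℕ) (w : Raw) : Prop :=
  ∃ e q k t f s, IsSpine h e k t f ∧ (q * NN h + (t - 1)) * width h e = x ∧ f ≤ c ∧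
    w = .spine (e + 1) (q + 1) k t f s

section

variable {h d m c e i j k n q t f x : ℕ} {R : Set Raw} {u v w y : Raw}

theorem IsSpine.level_le_of_pos_eq (hs : IsSpine h e k t f) {e' : ℕ}
    (heq : (q * NN h + (t - 1)) * width h e = n * width h e') : e' ≤ e := by
  by_contra! hlt
  rw [← pow_mul_width hs.one_le hlt.le, ← mul_assoc] at heq
  have hpos := Nat.eq_of_mul_eq_mul_right (width_pos h e) heq
  have hdvd : NN h ∣ q * NN h + (t - 1) :=
    hpos ▸ (dvd_pow_self _ (by omega)).mul_left _
  have := hs.two_le_t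
  have := hs.t_le_NN
  exact Nat.not_dvd_of_pos_of_lt (by omega) (by omega)
    ((Nat.dvd_add_right (Nat.dvd_mul_left _ _)).1 hdvd)

theorem IsGuard.unique (hv : IsGuard h m x v) (hw : IsGuard h m x w) : v = w := by
  obtain ⟨e, q, k, t, f, hs, hx, rfl⟩ := hv
  obtain ⟨e', q', k', t', f', hs', hx', rfl⟩ := hw
  have heq := hx.trans hx'.symm
  obtain rfl : e = e' := le_antisymm (hs'.level_le_of_pos_eq heq.symm) (hs.level_le_of_pos_eq heq)
  have hpos := Nat.eq_of_mul_eq_mul_right (width_pos h e) heq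
  obtain ⟨hk, -, ht, ht1, -⟩ := id hs
  obtain ⟨hk', -, ht', ht1', -⟩ := id hs'
  have := hs.t_le_NN
  have := hs'.t_le_NN
  have hdiv := (Nat.div_mod_unique (c := t - 1) (d := q) (NN_pos h)).2
    ⟨by rw [mul_comm, add_comm], by omega⟩
  have hdiv' := (Nat.div_mod_unique (c := t' - 1) (d := q') (NN_pos h)).2
    ⟨by rw [mul_comm, add_comm], by omega⟩
  rw [hpos] at hdiv
  obtain rfl : q = q' := hdiv.1.symm.trans hdiv'.1
  obtain rfl : k = k' := by omega
  rfl

theorem exists_copy_of_adj (hh : 1 ≤ h) (hR : RootFree h d m R) (hv : v ∈ R) (hw : w ∈ R)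
    (hvc : level v ≤ c) (hwc : level w ≤ c) (hvw : Adj h d m v w) :
    ∃ j, v ∈ copy h d c j ∧ w ∈ copy h d c j := by
  obtain ⟨e, q, hedge | hedge⟩ := hR.exists_edge hv hw hvw
  · have hec : e ≤ c := hedge.level_eq hh ▸ hvc
    obtain ⟨hvq, hwq⟩ := hedge.mem_copy hh
    exact ⟨_, copy_subset_copy hedge.one_le hec hvq, copy_subset_copy hedge.one_le hec hwq⟩
  · have hec : e ≤ c := hedge.level_eq hh ▸ hwc
    obtain ⟨hwq, hvq⟩ := hedge.mem_copy hh
    exact ⟨_, copy_subset_copy hedge.one_le hec hvq, copy_subset_copy hedge.one_le hec hwq⟩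

theorem crosses_of_joined_columns (hu : u ∈ column h d c (i * width h c))
    (hw : w ∈ column h d c (n * width h c)) (huw : Joined (Adj h d m) (R ∩ copy h d c j) u w)
    (hin : n ≠ i) : (j = i ∨ j + 1 = i) ∧ Crosses h d m c j R := by
  have hi := (mem_copy_iff_of_mem_column hu).1 huw.left_mem.2
  have hn := (mem_copy_iff_of_mem_column hw).1 huw.right_mem.2
  refine ⟨by omega, ?_⟩
  rcases hi with rfl | rfl
  · obtain rfl : n = i + 1 := by omega
    exact ⟨u, hu, w, hw, huw⟩
  · obtain rfl : n = j := by omega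
    exact ⟨w, hw, u, hu, huw.symm⟩

theorem exists_crosses_of_joined_low (hh : 1 ≤ h) (hR : RootFree h d m R)
    (hu : u ∈ column h d c (i * width h c)) (hw : w ∈ column h d c (n * width h c))
    (huw : Joined (Adj h d m) (R ∩ {x | level x ≤ c}) u w) (hin : n ≠ i) :
    ∃ j, (j = i ∨ j + 1 = i) ∧ Crosses h d m c j R := by
  by_contra! hno
  have eq_of_joined {j n : ℕ} {u v : Raw} (hu : u ∈ column h d c (i * width h c))
      (huv : Joined (Adj h d m) (R ∩ copy h d c j) u v)
      (hv : v ∈ column h d c (n * width h c)) : n = i := by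
    by_contra hne
    obtain ⟨hj, hcross⟩ := crosses_of_joined_columns hu hv huv hne
    exact hno j hj hcross
  obtain ⟨j, u', hu', huw'⟩ : ∃ j, ∃ u' ∈ column h d c (i * width h c),
      Joined (Adj h d m) (R ∩ copy h d c j) u' w := by
    refine huw.preserves (p := fun w => ∃ j, ∃ u' ∈ column h d c (i * width h c),
      Joined (Adj h d m) (R ∩ copy h d c j) u' w) ?_
      ⟨i, u, hu, .refl ⟨huw.left_mem.1, (mem_copy_iff_of_mem_column hu).2 (.inl rfl)⟩⟩
    rintro v hv w hw hvw ⟨j, u, hu, huv⟩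
    obtain ⟨j', hvj, hwj⟩ := exists_copy_of_adj hh hR hv.1 hw.1 hv.2 hw.2 hvw
    have restart {n : ℕ} (hvn : v ∈ column h d c (n * width h c)) :
        ∃ j, ∃ u' ∈ column h d c (i * width h c),
          Joined (Adj h d m) (R ∩ copy h d c j) u' w :=
      ⟨j', v, eq_of_joined hu huv hvn ▸ hvn, .of_adj ⟨hv.1, hvj⟩ ⟨hw.1, hwj⟩ hvw⟩
    rcases lt_trichotomy j j' with hlt | rfl | hlt
    · exact restart (mem_column_of_copy_of_copy hh hlt huv.right_mem.2 hvj).2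
    · exact ⟨j, u, hu, huv.tail ⟨hw.1, hwj⟩ hvw⟩
    · exact restart (mem_column_of_copy_of_copy hh hlt hvj huv.right_mem.2).2
  exact hin (eq_of_joined hu' huw' hw)

theorem exists_spine_of_level_lt (hh : 1 ≤ h) (hR : RootFree h d m R) (hv : v ∈ R) (hw : w ∈ R)
    (hvc : level v ≤ c) (hwc : c < level w) (hvw : Adj h d m v w) :
    ∃ e q k t f, IsSpine h e k t f ∧ c ≤ e ∧ v = gluingVertex h d m e (q * NN h + t) f ∧
      (w = node h m (e + 1) q (0, k - 1) ∨ ∃ s, w = .spine (e + 1) (q + 1) k t f s) := by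
  obtain ⟨e, q, hedge | hedge⟩ := hR.exists_edge hv hw hvw
  · have := (hedge.mem_copy hh).2.1
    have := hedge.level_eq hh
    omega
  have hlevel := hedge.level_eq hh
  cases hedge with
  | base => simp only [level] at *; omega
  | child _ _ _ _ ha ha' =>
    rw [level_node ha] at hvc
    omega
  | step => simp only [level] at *; omega
  | top => simp only [level] at *; omega
  | bottom e q k t f s hs => exact ⟨e, q, k, t, f, hs, by omega, rfl, .inr ⟨s, rfl⟩⟩
  | short e q k t f hs => exact ⟨e, q, k, t, f, hs, by omega, rfl, .inl rfl⟩

theorem gluingVertex_ne_spine (hh : 1 ≤ h) {j i k t f s l : ℕ} :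
    gluingVertex h d m e q l ≠ .spine j i k t f s := by
  rw [gluingVertex_eq hh, VsetElem]
  split_ifs <;> simp

theorem neighbor_of_spine (hh : 1 ≤ h) (hR : RootFree h d m R) {s : ℕ}
    (hv : .spine (e + 1) (q + 1) k t f s ∈ R) (hw : w ∈ R)
    (hvw : Adj h d m (.spine (e + 1) (q + 1) k t f s) w) :
    w = node h m (e + 1) q (0, k - 1) ∨ (∃ s', w = .spine (e + 1) (q + 1) k t f s') ∨
      w = gluingVertex h d m e (q * NN h + t) f := by
  obtain ⟨e', q', hedge⟩ := hR.exists_edge hv hw hvw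
  generalize heq : Raw.spine (e + 1) (q + 1) k t f s = v at hedge
  rcases hedge with hedge | hedge <;> cases hedge
  all_goals first
    | exact absurd heq.symm node_ne_spine
    | exact absurd heq.symm (gluingVertex_ne_spine hh)
    | (cases heq <;> simp)

theorem pos_eq_or_exists_crosses_of_joined_low (hh : 1 ≤ h) (hc : 1 ≤ c) (hR : RootFree h d m R)
    (hs : IsSpine h e k t f) (hce : c ≤ e) (hu : u ∈ column h d c (i * width h c))
    (huv : Joined (Adj h d m) (R ∩ {x | level x ≤ c}) u
      (gluingVertex h d m e (q * NN h + t) f)) :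
    (q * NN h + (t - 1)) * width h e = i * width h c ∨
      ∃ j, (j = i ∨ j + 1 = i) ∧ Crosses h d m c j R := by
  obtain ⟨-, hleft, hright⟩ := hs.gluingVertex_mem_column (d := d) (m := m) (q := q) hh
  rw [← pow_mul_width hc hce, ← mul_assoc] at hleft hright ⊢
  by_cases hn : (q * NN h + (t - 1)) * NN h ^ (e - c) = i
  · exact .inl (by rw [hn])
  · exact .inr (exists_crosses_of_joined_low hh hR hu ⟨huv.right_mem.2, hleft, hright⟩ huv hn)

theorem isGuard_or_isAbove_or_exists_crosses (hh : 1 ≤ h) (hc : 1 ≤ c) (hR : RootFree h d m R)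
    (hu : u ∈ column h d c (i * width h c))
    (huv : Joined (Adj h d m) (R ∩ {x | level x ≤ c}) u v) (hw : w ∈ R) (hwc : c < level w)
    (hvw : Adj h d m v w) :
    IsGuard h m (i * width h c) w ∨ IsAbove h c (i * width h c) w ∨
      ∃ j, (j = i ∨ j + 1 = i) ∧ Crosses h d m c j R := by
  obtain ⟨e, q, k, t, f, hs, hce, rfl, hws⟩ :=
    exists_spine_of_level_lt hh hR huv.right_mem.1 hw huv.right_mem.2 hwc hvw
  rcases pos_eq_or_exists_crosses_of_joined_low hh hc hR hs hce hu huv with hx | hcross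
  · rcases hws with rfl | ⟨s, rfl⟩
    · exact .inl ⟨e, q, k, t, f, hs, hx, rfl⟩
    · have hf : f ≤ c := (level_gluingVertex hh).symm.trans_le huv.right_mem.2
      exact .inr (.inl ⟨e, q, k, t, f, s, hs, hx, hf, rfl⟩)
  · exact .inr (.inr hcross)

theorem IsAbove.neighbor (hh : 1 ≤ h) (hR : RootFree h d m R) (hv : v ∈ R) (hw : w ∈ R)
    (hvw : Adj h d m v w) (habove : IsAbove h c x v) :
    IsGuard h m x w ∨ IsAbove h c x w ∨ w ∈ column h d c x := by
  obtain ⟨e, q, k, t, f, s, hs, hx, hf, rfl⟩ := habove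
  rcases neighbor_of_spine hh hR hv hw hvw with rfl | ⟨s', rfl⟩ | rfl
  · exact .inl ⟨e, q, k, t, f, hs, hx, rfl⟩
  · exact .inr (.inl ⟨e, q, k, t, f, s', hs, hx, hf, rfl⟩)
  · obtain ⟨-, hleft, hright⟩ := hs.gluingVertex_mem_column (d := d) (m := m) (q := q) hh
    exact .inr (.inr ⟨(level_gluingVertex hh).trans_le hf, hleft.trans hx, hright.trans hx⟩)

/-- A walk from a column that reaches a higher level off the spines must climb the spines above the
column, past their common leaf, unless it first moves to another column. -/
theorem exists_guard_or_crosses (hh : 1 ≤ h) (hc : 1 ≤ c) (hR : RootFree h d m R)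
    (hu : u ∈ column h d c (i * width h c)) (huw : Joined (Adj h d m) R u w) (hw : c < level w)
    (hw_spine : ∀ {e q k t f s}, w ≠ .spine e q k t f s) :
    (∃ v ∈ R, IsGuard h m (i * width h c) v) ∨
      ∃ j, (j = i ∨ j + 1 = i) ∧ Crosses h d m c j R := by
  by_contra! ⟨no_guard, no_cross⟩
  let Low (v : Raw) : Prop := ∃ u ∈ column h d c (i * width h c),
    Joined (Adj h d m) (R ∩ {x | level x ≤ c}) u v
  have low_of_mem_column {v : Raw} (hv : v ∈ R) (hvi : v ∈ column h d c (i * width h c)) : Low v :=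
    ⟨v, hvi, .refl ⟨hv, hvi.1⟩⟩
  have step (v : Raw) (hv : v ∈ R) (w : Raw) (hw : w ∈ R) (hvw : Adj h d m v w) :
      Low v ∨ IsAbove h c (i * width h c) v → Low w ∨ IsAbove h c (i * width h c) w := by
    rintro (⟨u, hu, huv⟩ | habove)
    · rcases le_or_gt (level w) c with hwc | hwc
      · exact .inl ⟨u, hu, huv.tail ⟨hw, hwc⟩ hvw⟩
      rcases isGuard_or_isAbove_or_exists_crosses hh hc hR hu huv hw hwc hvw with
        hguard | habove | ⟨j, hj, hcross⟩
      · exact absurd hguard (no_guard w hw)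
      · exact .inr habove
      · exact absurd hcross (no_cross j hj)
    · rcases habove.neighbor hh hR hv hw hvw with hguard | habove | hcol
      · exact absurd hguard (no_guard w hw)
      · exact .inr habove
      · exact .inl (low_of_mem_column hw hcol)
  rcases huw.preserves step (.inl (low_of_mem_column huw.left_mem hu)) with
    ⟨_, -, hlow⟩ | ⟨_, _, _, _, _, _, -, -, -, heq⟩
  · exact hw.not_ge hlow.right_mem.2
  · exact hw_spine heq

end

/-! ### Obstacles -/

/-- The obstacles of which every walk from the `i`-th column of level `c` to a higher level hits
one, and of which no two distant walks hit the same one. -/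
inductive Obstacle
  | root
  | guard
  | rightCopy
  | leftCopy
deriving DecidableEq

instance : Fintype Obstacle where
  elems := {.root, .guard, .rightCopy, .leftCopy}
  complete o := by cases o <;> decide

/-- The set `R` hits the given obstacle around the `i`-th column of level `c`: it contains the root
or the leaf above the column, or avoids the root and crosses one of the two copies of `G_{h,d,c}`
that share the column. -/
def Obstacle.IsHit (h d m c i : ℕ) (R : Set Raw) : Obstacle → Prop
  | root => RootR m ∈ R
  | guard => ∃ w ∈ R, IsGuard h m (i * width h c) w
  | rightCopy => RootFree h d m R ∧ Crosses h d m c i R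
  | leftCopy => RootFree h d m R ∧ ∃ j, j + 1 = i ∧ Crosses h d m c j R

section

variable {h d m c i : ℕ} {P Q R : Set Raw} {u w : Raw}

theorem Apart.not_isHit_both (hh : 1 ≤ h) (hc : 1 ≤ c) (hPQ : Apart h d m P Q) (o : Obstacle) :
    ¬ (o.IsHit h d m c i P ∧ o.IsHit h d m c i Q) := by
  rintro ⟨hP, hQ⟩
  cases o with
  | root => exact hPQ.ne _ hP _ hQ rfl
  | guard =>
    obtain ⟨v, hvP, hv⟩ := hP
    obtain ⟨w, hwQ, hw⟩ := hQ
    exact hPQ.ne v hvP w hwQ (hv.unique hw)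
  | rightCopy => exact hPQ.not_crosses_both hh hP.1 hQ.1 hc i ⟨hP.2, hQ.2⟩
  | leftCopy =>
    obtain ⟨hPfree, j, rfl, hPj⟩ := hP
    obtain ⟨hQfree, k, hk, hQk⟩ := hQ
    obtain rfl : k = j := by omega
    exact hPQ.not_crosses_both hh hPfree hQfree hc k ⟨hPj, hQk⟩

theorem exists_isHit (hh : 1 ≤ h) (hc : 1 ≤ c) (hR : ∀ w ∈ R, Valid h d m w)
    (hu : u ∈ column h d c (i * width h c)) (huw : Joined (Adj h d m) R u w) (hw : c < level w)
    (hw_spine : ∀ {e q k t f s}, w ≠ .spine e q k t f s) :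
    ∃ o : Obstacle, o.IsHit h d m c i R := by
  by_cases hroot : RootR m ∈ R
  · exact ⟨.root, hroot⟩
  have hfree : RootFree h d m R := ⟨hR, fun v hv hvr => hroot (hvr ▸ hv)⟩
  rcases exists_guard_or_crosses hh hc hfree hu huw hw hw_spine with
    hguard | ⟨j, rfl | hj, hcross⟩
  · exact ⟨.guard, hguard⟩
  · exact ⟨.rightCopy, hfree, hcross⟩
  · exact ⟨.leftCopy, hfree, j, hj, hcross⟩

theorem not_pairwise_apart_of_exists_isHit {ι : Type*} [Fintype ι] (hι : 4 < Fintype.card ι)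
    (hh : 1 ≤ h) (hc : 1 ≤ c) {R : ι → Set Raw}
    (hR : ∀ k, ∃ o : Obstacle, o.IsHit h d m c i (R k)) :
    ¬ Pairwise fun k l => Apart h d m (R k) (R l) := by
  intro hapart
  choose o ho using hR
  obtain ⟨k, l, hkl, heq⟩ := Fintype.exists_ne_map_eq_of_card_lt o hι
  exact (hapart hkl).not_isHit_both hh hc (o k) ⟨ho k, heq ▸ ho l⟩

end

/-! ### Walks and distances in the graph -/

section

variable {h d m : ℕ} {U U' : Set (Verts h d m)} {u v : Verts h d m}

theorem G_adj : (G h d m).Adj u v ↔ u ≠ v ∧ Adj h d m u v := by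
  simp [G, Adj, SimpleGraph.fromRel_adj, Subtype.ext_iff]

theorem joined_walkSupp (p : (G h d m).Walk u v) :
    Joined (Adj h d m) (Subtype.val '' CGT.walkSupp p) u v := by
  suffices ∀ R : Set Raw, (∀ w ∈ p.support, w.1 ∈ R) → Joined (Adj h d m) R u v from
    this _ fun w hw => ⟨w, hw, rfl⟩
  intro R hR
  induction p with
  | nil => exact .refl (hR _ (by simp))
  | cons huv p ih =>
    exact (Joined.of_adj (hR _ (by simp)) (hR _ (by simp)) (G_adj.1 huv).2).trans
      (ih fun w hw => hR w (by simp [hw]))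

theorem edist_le_one_of_adj (huv : Adj h d m u v) : (G h d m).edist u v ≤ 1 := by
  rcases eq_or_ne u v with rfl | hne
  · simp
  · exact (SimpleGraph.edist_eq_one_iff_adj.2 (G_adj.2 ⟨hne, huv⟩)).le

theorem apart_of_three_le_sDist (hU : 3 ≤ CGT.sDist (G h d m) U U') :
    Apart h d m (Subtype.val '' U) (Subtype.val '' U') := by
  have three_le {u v : Verts h d m} (hu : u ∈ U) (hv : v ∈ U') : 3 ≤ (G h d m).edist u v :=
    hU.trans ((iInf_le _ (⟨u, hu⟩ : U)).trans (iInf_le _ (⟨v, hv⟩ : U')))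
  refine ⟨?_, ?_, ?_⟩
  · rintro _ ⟨u, hu, rfl⟩ _ ⟨v, hv, rfl⟩ huv
    have := three_le hu hv
    rw [Subtype.ext huv] at this
    simp at this
  · rintro _ ⟨u, hu, rfl⟩ _ ⟨v, hv, rfl⟩ huv
    exact absurd ((three_le hu hv).trans (edist_le_one_of_adj huv)) (by decide)
  · rintro _ ⟨u, hu, rfl⟩ _ ⟨v, hv, rfl⟩ z hz huz hzv
    have huz := edist_le_one_of_adj (v := ⟨z, hz⟩) huz
    have hzv := edist_le_one_of_adj (u := ⟨z, hz⟩) hzv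
    exact absurd ((three_le hu hv).trans (SimpleGraph.edist_triangle.trans (add_le_add huz hzv)))
      (by decide)

end

/-! ### Gluing sets are not path-connected -/

theorem exists_card_filter_le_eq {α : Type*} {S : Finset α} {l : α → ℕ} {n : ℕ}
    (hl : Set.InjOn l S) (hn : 1 ≤ n) (hnS : n ≤ S.card) :
    ∃ c, (S.filter (l · ≤ c)).card = n := by
  classical
  have hex : ∃ c, n ≤ (S.filter (l · ≤ c)).card :=
    ⟨S.sup l, by rwa [Finset.filter_true_of_mem fun x hx => Finset.le_sup hx]⟩
  refine ⟨Nat.find hex, (Nat.find_spec hex).antisymm' ?_⟩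
  have hlt : (S.filter (l · < Nat.find hex)).card < n := by
    rcases hfind : Nat.find hex with _ | c
    · simpa using Nat.lt_of_succ_le hn
    · simpa only [Nat.lt_succ_iff, not_le] using Nat.find_min hex (hfind ▸ c.lt_succ_self)
  have heq : (S.filter (l · = Nat.find hex)).card ≤ 1 := Finset.card_le_one.2 fun x hx y hy => by
    rw [Finset.mem_filter] at hx hy
    exact hl hx.1 hy.1 (hx.2.trans hy.2.symm)
  have hunion : S.filter (l · ≤ Nat.find hex) =
      S.filter (l · < Nat.find hex) ∪ S.filter (l · = Nat.find hex) := by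
    simp only [← Finset.filter_or, ← le_iff_lt_or_eq]
  have := Finset.card_union_le (S.filter (l · < Nat.find hex)) (S.filter (l · = Nat.find hex))
  rw [hunion]
  omega

section

variable {h d m j n : ℕ} {S : Finset (Verts h d m)}

theorem card_le_two_of_subset_lift_VsetRaw_zero {S : Finset (Verts 0 d m)}
    (hS : ↑S ⊆ lift (h := 0) (d := d) (m := m) (VsetRaw 0 d m j n)) : S.card ≤ 2 := by
  classical
  let x : Raw := .path ((n - 1) * NN 0 ^ (j - 1) * (d + 1))
  have hsub : S.image Subtype.val ⊆ {x, RootR m} := by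
    intro y hy
    obtain ⟨z, hz, rfl⟩ := Finset.mem_image.1 hy
    obtain ⟨e, -, -, he⟩ := hS hz
    rw [he, VsetElem]
    split_ifs <;> simp [canon, RootR, x]
  rw [← Finset.card_image_of_injective S Subtype.val_injective]
  exact (Finset.card_le_card hsub).trans Finset.card_le_two

theorem injOn_level_VsetRaw (hh : 1 ≤ h) {g : ℕ} : Set.InjOn level (VsetRaw h d m j g) := by
  rintro _ ⟨e, -, -, rfl⟩ _ ⟨e', -, -, rfl⟩ heq
  change level (gluingVertex h d m j g e) = level (gluingVertex h d m j g e') at heq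
  rw [level_gluingVertex hh, level_gluingVertex hh] at heq
  rw [heq]

theorem exists_isHit_of_walk (hh : 1 ≤ h) {c : ℕ} {a b : Verts h d m} (p : (G h d m).Walk a b)
    (ha : a.1 ∈ VsetRaw h d m j (n + 1)) (hac : level a ≤ c) (hb : b.1 ∈ VsetRaw h d m j (n + 1))
    (hbc : c < level b) :
    ∃ o : Obstacle, o.IsHit h d m c (n * NN h ^ (j - c)) (Subtype.val '' CGT.walkSupp p) := by
  obtain ⟨e, he, hej, hae⟩ := ha
  obtain ⟨f, -, hfj, hbf⟩ := hb
  have ha_level : level a = e := hae ▸ level_gluingVertex hh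
  have hb_level : level b = f := hbf ▸ level_gluingVertex hh
  have hac_col : a.1 ∈ column h d c (n * NN h ^ (j - c) * width h c) := by
    rw [mul_assoc, pow_mul_width (by omega) (by omega)]
    have hcol := gluingVertex_mem_column (d := d) (m := m) (n := n) hh he hej
    exact ⟨hac, hae ▸ hcol.2⟩
  refine exists_isHit hh (by omega) ?_ hac_col (joined_walkSupp p) hbc ?_
  · rintro _ ⟨w, -, rfl⟩
    exact w.2
  · exact hbf ▸ gluingVertex_ne_spine hh

theorem one_le_level_of_mem_VsetRaw (hh : 1 ≤ h) {g : ℕ} {x : Raw} (hx : x ∈ VsetRaw h d m j g) :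
    1 ≤ level x := by
  obtain ⟨e, he, -, rfl⟩ := hx
  exact he.trans_eq (level_gluingVertex hh).symm

theorem exists_subsets_level_le_lt (hh : 1 ≤ h) {g : ℕ} (hn : 1 ≤ n)
    (hS : ↑S ⊆ lift (h := h) (d := d) (m := m) (VsetRaw h d m j g)) (hcard : 2 * n ≤ S.card) :
    ∃ c, 1 ≤ c ∧ ∃ A ⊆ S, ∃ B ⊆ S, A.card = n ∧ B.card = n ∧
      (∀ a ∈ A, level a ≤ c) ∧ ∀ b ∈ B, c < level b := by
  have hinj : Set.InjOn (fun x : Verts h d m => level x) S := fun x hx y hy hxy =>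
    Subtype.ext (injOn_level_VsetRaw hh (hS hx) (hS hy) hxy)
  obtain ⟨c, hc⟩ := exists_card_filter_le_eq hinj hn (by omega)
  have hsum := Finset.card_filter_add_card_filter_not (s := S) (fun x : Verts h d m => level x ≤ c)
  obtain ⟨B, hB, hBn⟩ := Finset.exists_subset_card_eq
    (show n ≤ (S.filter fun x : Verts h d m => ¬ level x ≤ c).card by omega)
  obtain ⟨a, ha⟩ := Finset.card_pos.1 (hc.symm ▸ hn : 0 < _)
  rw [Finset.mem_filter] at ha
  exact ⟨c, (one_le_level_of_mem_VsetRaw hh (hS ha.1)).trans ha.2, _, Finset.filter_subset _ S, B,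
    hB.trans (Finset.filter_subset _ S), hc, hBn, fun a ha => (Finset.mem_filter.1 ha).2,
    fun b hb => not_le.1 (Finset.mem_filter.1 (hB hb)).2⟩

end
end Ghdm

theorem statement12_general {h d m j g K n : ℕ} (hg : 1 ≤ g) (hK : 3 ≤ K) (hn : 5 ≤ n)
    {W : Set (Ghdm.Verts h d m)} (hW : W ⊆ Ghdm.lift (Ghdm.VsetRaw h d m j g)) :
    ¬ CGT.FatPathConn (Ghdm.G h d m) K n W := by
  rintro ⟨⟨S, hSW, hS⟩, -, hpaths⟩
  obtain ⟨g, rfl⟩ := Nat.exists_eq_add_of_le' hg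
  rcases Nat.eq_zero_or_pos h with rfl | hh
  · have := Ghdm.card_le_two_of_subset_lift_VsetRaw_zero (hSW.trans hW)
    omega
  have hSV := hSW.trans hW
  obtain ⟨c, hc, A, hAS, B, hBS, hA, hB, hAc, hBc⟩ :=
    Ghdm.exists_subsets_level_le_lt (n := 5) hh (by omega) hSV (by omega)
  obtain ⟨a, b, P, -, hab, hfar⟩ := hpaths 5 hn A B
    ((Finset.coe_subset.2 hAS).trans hSW) ((Finset.coe_subset.2 hBS).trans hSW) hA hB
  exact Ghdm.not_pairwise_apart_of_exists_isHit (by simp) hh hc (fun k =>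
    Ghdm.exists_isHit_of_walk hh (P k) (hSV (hAS (hab k).1)) (hAc _ (hab k).1)
      (hSV (hBS (hab k).2)) (hBc _ (hab k).2)) fun k l hkl =>
    Ghdm.apart_of_three_le_sDist ((Nat.cast_le.2 hK).trans (hfar k l hkl))

/-- no gluing set `V_i^j` of `G_{h,d,m}` contains a subset that is 3-fat
7-path-connected in `G_{h,d,m}`. -/
theorem statement12 (h d m : ℕ) (hm : 2 ≤ m) (j g : ℕ)
    (hj1 : 1 ≤ j) (hj2 : j ≤ m - 1) (hg1 : 1 ≤ g) (hg2 : g ≤ Ghdm.NN h ^ (m - j) + 1)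
    (W : Set (Ghdm.Verts h d m)) (hWsub : W ⊆ Ghdm.lift (Ghdm.VsetRaw h d m j g)) :
    ¬ CGT.FatPathConn (Ghdm.G h d m) 3 7 W :=
  statement12_general hg1 le_rfl (by omega) hWsub
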